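/- arXiv:1306.4236 — 4 statements merged into one kernel-verified Lean document; each statement's English description precedes it below -/
import Mathlib

section
/- For every integer k > 2 there exist constants R = R(k) and s0 = s0(k) such that for every integer s > s0: if F is a k-uniform [R,s]-almost intersecting hypergraph with at least (s+1)·(2k-2 choose k-1) edges, then there exists a set S of 2k-2 vertices such that every edge of F intersects S in exactly k-1 elements, and every (k-1)-element subset of S is contained in exactly s+1 edges of F. -/
universe u

/-!
Write `k = n + 1`. Replace every edge `A` by a *core* `τ A ⊆ A` of at most `n` points, such that few
edges meet a given edge `B` while their cores avoid it. The edges avoiding `A` yield a *kernel*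
avoiding `τ A`: a set of at most `n` points that extends to an edge `B` meeting no core outside the
kernel. As at most `s` edges avoid `B`, the kernel avoids at most `s + δ` cores, with `δ` small
against `s`.

Number the vertices at random, as in Bollobás's set-pair inequality. For each numbering, all cores
preceded by some kernel avoid the kernel that is completed first, so at most `s + δ` cores are
preceded by a kernel; but each core is preceded by a kernel with probability at least
`1 / (2n choose n)`. As there are at least `(s + 1) (2n choose n)` edges, this probability must be
attained for most of them, and these give an extremal set-pair system: the `n`-subsets of a
`2n`-set `S` with their complements in `S`. Hence every `n`-subset of `S` lies in at least `2s/3`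
edges. Since at most `s` edges avoid any given one, this forces every edge to meet `S` in exactly
`n` points and every `n`-subset of `S` to lie in at most, hence exactly, `s + 1` edges.
-/

section Separating

open Finset

lemma exists_numbering_of_rank {α : Type*} [Fintype α] (r : α → ℕ) :
    ∃ f : Numbering α, ∀ x y, r x < r y → f x < f y := by
  let e := Fintype.equivFin α
  refine ⟨e.trans (Tuple.sort (r ∘ e.symm)).symm, fun x y hxy => ?_⟩
  contrapose! hxy
  simpa using Tuple.monotone_sort (r ∘ e.symm) hxy

lemma exists_perm_mapsTo {α : Type*} {U U' T T' : Finset α} (hUT : Disjoint U T)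
    (hUT' : Disjoint U' T') (hU : #U = #U') (hT : #T = #T') :
    ∃ g : Equiv.Perm α, (∀ x ∈ U, g x ∈ U') ∧ ∀ x ∈ T, g x ∈ T' := by
  have hinj {A B : Finset α} (hAB : Disjoint A B) :
      Function.Injective (Sum.elim Subtype.val Subtype.val : A ⊕ B → α) :=
    Subtype.val_injective.sumElim Subtype.val_injective
      fun a b hab => disjoint_left.1 hAB a.2 (hab ▸ b.2)
  let e : U ⊕ T ≃ U' ⊕ T' := (equivOfCardEq hU).sumCongr (equivOfCardEq hT)
  obtain ⟨g, hg⟩ := Equiv.Perm.exists_extending_pair _ _ (hinj hUT) ((hinj hUT').comp e.injective)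
  refine ⟨g, fun x hx => ?_, fun x hx => ?_⟩
  · rw [show g x = _ from hg (.inl ⟨x, hx⟩)]
    exact (equivOfCardEq hU ⟨x, hx⟩).2
  · rw [show g x = _ from hg (.inr ⟨x, hx⟩)]
    exact (equivOfCardEq hT ⟨x, hx⟩).2

variable {α ι : Type*} [Fintype α] [DecidableEq α] {U U' T T' : Finset α} {f : Numbering α}

/-- The numberings of `α` in which every element of `U` comes before every element of `T`. -/
def separating (U T : Finset α) : Finset (Numbering α) :=
  {f | ∀ x ∈ U, ∀ y ∈ T, f x < f y}

@[simp] lemma mem_separating : f ∈ separating U T ↔ ∀ x ∈ U, ∀ y ∈ T, f x < f y := by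
  simp [separating]

lemma disjoint_of_mem_separating (hf : f ∈ separating U T) : Disjoint U T :=
  disjoint_left.2 fun x hU hT => lt_irrefl _ (mem_separating.1 hf x hU x hT)

lemma separating_union_left (U U' T : Finset α) :
    separating (U ∪ U') T = separating U T ∩ separating U' T := by
  ext f
  simp only [mem_separating, mem_inter, mem_union, or_imp, forall_and]

lemma disjoint_separating_separating (h : ¬ Disjoint U T') (h' : ¬ Disjoint U' T) :
    Disjoint (separating U T) (separating U' T') := by
  obtain ⟨x, hxU, hxT'⟩ := not_disjoint_iff.1 h
  obtain ⟨y, hyU', hyT⟩ := not_disjoint_iff.1 h'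
  refine disjoint_left.2 fun f hf hf' => ?_
  rw [mem_separating] at hf hf'
  exact lt_asymm (hf x hxU y hyT) (hf' y hyU' x hxT')

lemma exists_subset_card_eq_mem_separating (f : Numbering α) (S : Finset α) {u : ℕ}
    (hu : u ≤ #S) : ∃ U ⊆ S, #U = u ∧ f ∈ separating U (S \ U) := by
  induction u with
  | zero => exact ⟨∅, by simp⟩
  | succ u ih =>
    obtain ⟨U, hUS, rfl, hf⟩ := ih (by lia)
    have hne : (S \ U).Nonempty := card_pos.1 (by rw [card_sdiff_of_subset hUS]; lia)
    obtain ⟨z, hz, hmin⟩ := exists_min_image (S \ U) f hne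
    obtain ⟨hzS, hzU⟩ := mem_sdiff.1 hz
    refine ⟨insert z U, insert_subset hzS hUS, card_insert_of_notMem hzU,
      mem_separating.2 fun x hx y hy => ?_⟩
    have hyz : y ≠ z := by rintro rfl; simp at hy
    have hyU : y ∈ S \ U := sdiff_subset_sdiff le_rfl (subset_insert z U) hy
    obtain rfl | hx := mem_insert.1 hx
    · exact (hmin y hyU).lt_of_ne (f.injective.ne hyz.symm)
    · exact mem_separating.1 hf x hx y hyU

lemma biUnion_powersetCard_separating (S : Finset α) {u : ℕ} (hu : u ≤ #S) :
    (S.powersetCard u).biUnion (fun U => separating U (S \ U)) = univ :=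
  eq_univ_of_forall fun f => by
    obtain ⟨U, hUS, hU, hf⟩ := exists_subset_card_eq_mem_separating f S hu
    exact mem_biUnion.2 ⟨U, mem_powersetCard.2 ⟨hUS, hU⟩, hf⟩

lemma card_separating_le (hUT : Disjoint U T) (hUT' : Disjoint U' T') (hU : #U = #U')
    (hT : #T = #T') : #(separating U' T') ≤ #(separating U T) := by
  obtain ⟨g, hgU, hgT⟩ := exists_perm_mapsTo hUT hUT' hU hT
  refine card_le_card_of_injOn (g.trans ·) (fun f hf => ?_) fun f _ f' _ hff' => ?_
  · exact mem_separating.2 fun x hx y hy => mem_separating.1 hf _ (hgU x hx) _ (hgT y hy)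
  · exact Equiv.ext fun x => by simpa using Equiv.congr_fun hff' (g.symm x)

lemma card_separating_congr (hUT : Disjoint U T) (hUT' : Disjoint U' T') (hU : #U = #U')
    (hT : #T = #T') : #(separating U T) = #(separating U' T') :=
  (card_separating_le hUT' hUT hU.symm hT.symm).antisymm (card_separating_le hUT hUT' hU hT)

lemma choose_mul_dens_separating (hUT : Disjoint U T) :
    ((#U + #T).choose #U : ℚ≥0) * (separating U T).dens = 1 := by
  have hcard : #(U ∪ T) = #U + #T := card_union_of_disjoint hUT
  have hdisj : ((U ∪ T).powersetCard #U : Set (Finset α)).PairwiseDisjoint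
      fun V => separating V ((U ∪ T) \ V) := by
    have key : ∀ V ∈ (U ∪ T).powersetCard #U, ∀ W ∈ (U ∪ T).powersetCard #U, V ≠ W →
        ¬ Disjoint V ((U ∪ T) \ W) := fun V hV W hW hVW h => by
      rw [mem_powersetCard] at hV hW
      exact hVW (eq_of_subset_of_card_le ((disjoint_sdiff_iff_le hV.1 hW.1).1 h) (by lia))
    exact fun V hV W hW hVW =>
      disjoint_separating_separating (key V hV W hW hVW) (key W hW V hV hVW.symm)
  have hconst : ∀ V ∈ (U ∪ T).powersetCard #U,
      (separating V ((U ∪ T) \ V)).dens = (separating U T).dens := fun V hV => by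
    rw [mem_powersetCard] at hV
    rw [dens, dens, card_separating_congr disjoint_sdiff hUT hV.2
      (by rw [card_sdiff_of_subset hV.1]; lia)]
  have : Nonempty (Numbering α) := ⟨Fintype.equivFin α⟩
  calc ((#U + #T).choose #U : ℚ≥0) * (separating U T).dens
      = ∑ V ∈ (U ∪ T).powersetCard #U, (separating V ((U ∪ T) \ V)).dens := by
        rw [sum_congr rfl hconst, sum_const, card_powersetCard, hcard, nsmul_eq_mul]
    _ = 1 := by
        rw [← dens_biUnion hdisj, biUnion_powersetCard_separating _ (by lia), dens_univ]

lemma one_le_choose_mul_dens_biUnion_separating {𝒰 : Finset (Finset α)} (hU : U ∈ 𝒰)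
    (hUT : Disjoint U T) :
    1 ≤ ((#U + #T).choose #U : ℚ≥0) * (𝒰.biUnion (separating · T)).dens := by
  rw [← choose_mul_dens_separating hUT]
  gcongr
  exact subset_biUnion_of_mem (separating · T) hU

lemma exists_forall_mem_separating {𝒰 : Finset (Finset α)} (h𝒰 : 𝒰.Nonempty) (f : Numbering α) :
    ∃ U₀ ∈ 𝒰, ∀ U ∈ 𝒰, ∀ T, f ∈ separating U T → f ∈ separating U₀ T := by
  obtain ⟨U₀, hU₀, hmin⟩ := exists_min_image 𝒰 (fun U => U.sup fun x => (f x : ℕ) + 1) h𝒰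
  refine ⟨U₀, hU₀, fun U hU T hf => mem_separating.2 fun x hx y hy => ?_⟩
  calc (f x : ℕ) + 1 ≤ U₀.sup fun x => (f x : ℕ) + 1 := le_sup (f := fun x => (f x : ℕ) + 1) hx
    _ ≤ U.sup fun x => (f x : ℕ) + 1 := hmin U hU
    _ ≤ f y := Finset.sup_le fun z hz => mem_separating.1 hf z hz y hy

lemma sum_dens_biUnion_separating_le (F : Finset ι) (τ : ι → Finset α) (𝒰 : Finset (Finset α))
    {w : ℕ} (hw : ∀ U ∈ 𝒰, #{A ∈ F | Disjoint U (τ A)} ≤ w) :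
    ∑ A ∈ F, (𝒰.biUnion (separating · (τ A))).dens ≤ w := by
  have hfiber : ∀ f : Numbering α, #{A ∈ F | f ∈ 𝒰.biUnion (separating · (τ A))} ≤ w := fun f => by
    obtain rfl | h𝒰 := 𝒰.eq_empty_or_nonempty
    · simp
    obtain ⟨U₀, hU₀, hfirst⟩ := exists_forall_mem_separating h𝒰 f
    refine (card_le_card <| monotone_filter_right F fun A _ hA => ?_).trans (hw U₀ hU₀)
    obtain ⟨U, hU, hf⟩ := mem_biUnion.1 hA
    exact disjoint_of_mem_separating (hfirst U hU _ hf)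
  have hcount : ∑ A ∈ F, #(𝒰.biUnion (separating · (τ A))) ≤ Fintype.card (Numbering α) * w := by
    have := sum_card_bipartiteAbove_eq_sum_card_bipartiteBelow (s := F)
      (t := (univ : Finset (Numbering α))) fun A f => f ∈ 𝒰.biUnion (separating · (τ A))
    simp only [bipartiteAbove, bipartiteBelow, filter_univ_mem] at this
    rw [this]
    exact (sum_le_card_nsmul univ _ w fun f _ => hfiber f).trans_eq (by rw [card_univ, smul_eq_mul])
  simp only [dens, ← sum_div]
  exact div_le_of_le_mul₀ (by positivity) (by positivity) (by rw [mul_comm]; exact_mod_cast hcount)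

end Separating

section SetPairs

open Finset

variable {α ι : Type*} {I : Finset ι} {U T : ι → Finset α} {p q : ℕ} {i : ι}
  {a b : α}

/-- A *Bollobás set-pair system*: `p`-sets `U i` and `q`-sets `T i`, indexed by `I`, such that `U i`
avoids `T i` but meets every other `T j`. -/
structure IsSetPairSystem (I : Finset ι) (U T : ι → Finset α) (p q : ℕ) : Prop where
  card_left : ∀ i ∈ I, #(U i) = p
  card_right : ∀ i ∈ I, #(T i) = q
  disjoint_iff : ∀ i ∈ I, ∀ j ∈ I, Disjoint (U i) (T j) ↔ i = j

namespace IsSetPairSystem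

lemma disjoint (h : IsSetPairSystem I U T p q) (hi : i ∈ I) : Disjoint (U i) (T i) :=
  (h.disjoint_iff i hi i hi).2 rfl

lemma symm (h : IsSetPairSystem I U T p q) : IsSetPairSystem I T U q p :=
  ⟨h.card_right, h.card_left, fun i hi j hj => by
    rw [disjoint_comm, h.disjoint_iff j hj i hi, eq_comm]⟩

lemma injOn (h : IsSetPairSystem I U T p q) : Set.InjOn U I := fun i hi j hj hij =>
  (h.disjoint_iff i hi j hj).1 (hij ▸ h.disjoint hj)

lemma choose_mul_dens_biUnion_separating [Fintype α] [DecidableEq α]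
    (h : IsSetPairSystem I U T p q) :
    ((p + q).choose p : ℚ≥0) * (I.biUnion fun i => separating (U i) (T i)).dens = #I := by
  have hdisj : (I : Set ι).PairwiseDisjoint fun i => separating (U i) (T i) :=
    fun i hi j hj hij => disjoint_separating_separating
      (mt (h.disjoint_iff i hi j hj).1 hij) (mt (h.disjoint_iff j hj i hi).1 hij.symm)
  have hterm : ∀ i ∈ I, ((p + q).choose p : ℚ≥0) * (separating (U i) (T i)).dens = 1 :=
    fun i hi => by
      simpa only [h.card_left i hi, h.card_right i hi]
        using choose_mul_dens_separating (h.disjoint hi)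
  rw [dens_biUnion hdisj, mul_sum, sum_congr rfl hterm, sum_const, nsmul_eq_mul, mul_one]

lemma card_le_choose [Finite α] (h : IsSetPairSystem I U T p q) : #I ≤ (p + q).choose p := by
  classical
  have := Fintype.ofFinite α
  have hle : (#I : ℚ≥0) ≤ (p + q).choose p := by
    rw [← h.choose_mul_dens_biUnion_separating]
    exact mul_le_of_le_one_right (by positivity) dens_le_one
  exact_mod_cast hle

variable [DecidableEq α]

lemma exists_mem_separating [Fintype α] (h : IsSetPairSystem I U T p q)
    (hI : #I = (p + q).choose p) (f : Numbering α) : ∃ i ∈ I, f ∈ separating (U i) (T i) := by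
  have hpos : ((p + q).choose p : ℚ≥0) ≠ 0 := by
    exact_mod_cast (Nat.choose_pos (Nat.le_add_right p q)).ne'
  have hdens : (I.biUnion fun i => separating (U i) (T i)).dens = 1 :=
    (mul_eq_left₀ hpos).1 (by rw [h.choose_mul_dens_biUnion_separating, hI])
  have : Nonempty (Numbering α) := ⟨Fintype.equivFin α⟩
  exact mem_biUnion.1 (dens_eq_one.1 hdens ▸ mem_univ f)

/- Number `U i \ {b}` first, then `a`, then `b`, then everything else. The pair `(U j, T j)`
separated by this numbering is not `(U i, T i)`, so `T j` meets `U i`, and `U j` comes before it. -/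
lemma exists_left_eq_insert_erase [Finite α] (h : IsSetPairSystem I U T p q)
    (hI : #I = (p + q).choose p) (hi : i ∈ I) (ha : a ∈ T i) (hb : b ∈ U i) :
    ∃ j ∈ I, U j = insert a ((U i).erase b) := by
  have := Fintype.ofFinite α
  have haU : a ∉ U i := fun haU => disjoint_left.1 (h.disjoint hi) haU ha
  obtain ⟨f, hf⟩ := exists_numbering_of_rank fun x : α =>
    if x ∈ (U i).erase b then 0 else if x = a then 1 else if x = b then 2 else 3
  obtain ⟨j, hj, hfj⟩ := h.exists_mem_separating hI f
  rw [mem_separating] at hfj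
  have hji : j ≠ i := by
    rintro rfl
    exact lt_asymm (hfj b hb a ha) (hf a b (by grind))
  obtain ⟨x, hxU, hxT⟩ := not_disjoint_iff.1 (mt (h.disjoint_iff i hi j hj).1 hji.symm)
  refine ⟨j, hj, eq_of_subset_of_card_le (fun y hy => ?_) ?_⟩
  · by_contra hya
    have hyx : y ≠ x := by rintro rfl; exact lt_irrefl _ (hfj y hy y hxT)
    exact lt_asymm (hfj y hy x hxT) (hf x y (by grind))
  · rw [h.card_left j hj, card_insert_of_notMem (by grind), card_erase_add_one hb,
      h.card_left i hi]

lemma exists_eq_insert_erase [Finite α] (h : IsSetPairSystem I U T p q)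
    (hI : #I = (p + q).choose p) (hi : i ∈ I) (ha : a ∈ T i) (hb : b ∈ U i) :
    ∃ j ∈ I, U j = insert a ((U i).erase b) ∧ T j = insert b ((T i).erase a) := by
  obtain ⟨j, hj, hUj⟩ := h.exists_left_eq_insert_erase hI hi ha hb
  obtain ⟨j', hj', hTj'⟩ :=
    h.symm.exists_left_eq_insert_erase (by rw [hI, add_comm, Nat.choose_symm_add]) hi hb ha
  have hdisj : Disjoint (U j) (T j') := by
    have := disjoint_left.1 (h.disjoint hi)
    rw [hUj, hTj', disjoint_left]
    grind
  obtain rfl := (h.disjoint_iff j hj j' hj').1 hdisj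
  exact ⟨j, hj, hUj, hTj'⟩

lemma exists_image_eq_powersetCard [Finite α] (h : IsSetPairSystem I U T p q)
    (hI : #I = (p + q).choose p) : ∃ S, #S = p + q ∧ I.image U = S.powersetCard p := by
  obtain ⟨i₀, hi₀⟩ : I.Nonempty := card_pos.1 (hI ▸ Nat.choose_pos (Nat.le_add_right p q))
  set S := U i₀ ∪ T i₀ with hS
  have hcard : #S = p + q := by
    rw [hS, card_union_of_disjoint (h.disjoint hi₀), h.card_left i₀ hi₀, h.card_right i₀ hi₀]
  refine ⟨S, hcard, (eq_of_subset_of_card_le (fun V hV => ?_) ?_).symm⟩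
  · obtain ⟨hVS, hV⟩ := mem_powersetCard.1 hV
    obtain ⟨i, hi, hmin⟩ := exists_min_image {i ∈ I | U i ∪ T i = S} (fun i => #(V \ U i))
      ⟨i₀, mem_filter.2 ⟨hi₀, rfl⟩⟩
    obtain ⟨hiI, hiS⟩ := mem_filter.1 hi
    refine mem_image.2 ⟨i, hiI, ?_⟩
    by_contra hne
    have hcardV : #(U i) = #V := by rw [h.card_left i hiI, hV]
    obtain ⟨a, haV, haU⟩ := not_subset.1 fun hVU => hne (eq_of_subset_of_card_le hVU hcardV.le).symm
    obtain ⟨b, hbU, hbV⟩ := not_subset.1 fun hUV => hne (eq_of_subset_of_card_le hUV hcardV.ge)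
    have haT : a ∈ T i := (mem_union.1 (hiS ▸ hVS haV)).resolve_left haU
    obtain ⟨j, hj, hUj, hTj⟩ := h.exists_eq_insert_erase hI hiI haT hbU
    have hjS : U j ∪ T j = S := by rw [hUj, hTj, ← hiS]; grind
    have hlt : V \ U j ⊂ V \ U i := by
      rw [hUj, ssubset_iff_of_subset (by grind)]
      exact ⟨a, by grind⟩
    exact (card_lt_card hlt).not_ge (hmin j (mem_filter.2 ⟨hj, hjS⟩))
  · rw [card_image_of_injOn h.injOn, hI, card_powersetCard, hcard]

end IsSetPairSystem

end SetPairs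

section Stability

open Finset

lemma choose_add_le_centralBinom {a b n : ℕ} (h : a + b ≤ 2 * n) :
    (a + b).choose a ≤ n.centralBinom :=
  (Nat.choose_le_choose a h).trans (Nat.choose_le_centralBinom a n)

lemma two_mul_choose_add_le_centralBinom {a b n : ℕ} (h : a + b < 2 * n) :
    2 * (a + b).choose a ≤ n.centralBinom := by
  obtain ⟨m, rfl⟩ : ∃ m, n = m + 1 := ⟨n - 1, by lia⟩
  have hmiddle : (a + b).choose a ≤ (2 * m + 1).choose m := calc
    (a + b).choose a ≤ (2 * m + 1).choose a := Nat.choose_le_choose a (by lia)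
    _ ≤ (2 * m + 1).choose ((2 * m + 1) / 2) := Nat.choose_le_middle a _
    _ = (2 * m + 1).choose m := by congr 1; lia
  calc 2 * (a + b).choose a ≤ (2 * m + 1).choose m + (2 * m + 1).choose (m + 1) := by
        rw [Nat.choose_symm_half]; lia
    _ = (m + 1).centralBinom := by
        rw [Nat.centralBinom_eq_two_mul_choose, mul_add, mul_one, Nat.choose_succ_succ' (2 * m + 1)]

lemma three_mul_centralBinom_le_two_mul_choose {m n : ℕ} (hn : 0 < n) (hm : n < m) :
    3 * n.centralBinom ≤ 2 * (m + n).choose m := by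
  have hsucc : (2 * n + 1) * n.centralBinom = (2 * n + 1).choose (n + 1) * (n + 1) :=
    Nat.add_one_mul_choose_eq (2 * n) n
  have hmono : (2 * n + 1).choose (n + 1) ≤ (m + n).choose m := by
    rw [Nat.choose_symm_half, Nat.choose_symm_add]
    exact Nat.choose_le_choose n (by lia)
  refine Nat.le_of_mul_le_mul_left ?_ (Nat.succ_pos n)
  calc (n + 1) * (3 * n.centralBinom) ≤ 2 * ((2 * n + 1) * n.centralBinom) := by
        nlinarith [n.centralBinom_pos]
    _ = (n + 1) * (2 * (2 * n + 1).choose (n + 1)) := by rw [hsucc]; ring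
    _ ≤ (n + 1) * (2 * (m + n).choose m) := by gcongr

lemma card_le_card_fiber_add {ι β : Type*} [DecidableEq β] {G : Finset ι} {t : Finset β}
    {φ : ι → β} {b : β} {w : ℕ} (hφ : ∀ i ∈ G, φ i ∈ t) (hb : b ∈ t)
    (hw : ∀ c ∈ t, #{i ∈ G | φ i = c} ≤ w) :
    #G ≤ #{i ∈ G | φ i = b} + (#t - 1) * w := by
  rw [card_eq_sum_card_fiberwise hφ, ← add_sum_erase t _ hb, ← card_erase_of_mem hb]
  gcongr
  exact sum_le_card_nsmul _ _ _ fun c hc => hw c (mem_of_mem_erase hc)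

variable {α ι : Type*} {𝒰 : Finset (Finset α)} {n w : ℕ} {S T U V : Finset α} {τ : ι → Finset α}

/-- The pairs for which Bollobás's inequality can be tight: `T` has size `n`, and `U` is the only
member of `𝒰` avoiding `T` and also has size `n`. -/
structure IsSharpPair (𝒰 : Finset (Finset α)) (n : ℕ) (U T : Finset α) : Prop where
  mem : U ∈ 𝒰
  card_left : #U = n
  card_right : #T = n
  disjoint : Disjoint U T
  eq_of_disjoint : ∀ U' ∈ 𝒰, Disjoint U' T → U' = U

variable [DecidableEq α]

lemma sdiff_subset_of_isSharpPair (h : IsSharpPair 𝒰 n U T) (hn : 0 < n) (hUS : U ⊆ S)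
    (hS : S.powersetCard n ⊆ 𝒰) : S \ U ⊆ T := by
  intro x hx
  obtain ⟨hxS, hxU⟩ := mem_sdiff.1 hx
  obtain ⟨y, hy⟩ : U.Nonempty := card_pos.1 (h.card_left ▸ hn)
  by_contra hxT
  have hmem : insert x (U.erase y) ∈ 𝒰 := hS <| mem_powersetCard.2
    ⟨insert_subset hxS ((erase_subset y U).trans hUS), by
      rw [card_insert_of_notMem (by grind), card_erase_add_one hy, h.card_left]⟩
  have hdisj : Disjoint (insert x (U.erase y)) T :=
    disjoint_insert_left.2 ⟨hxT, h.disjoint.mono_left (erase_subset y U)⟩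
  exact hxU (h.eq_of_disjoint _ hmem hdisj ▸ mem_insert_self x _)

lemma exists_image_eq_powersetCard_of_isSharpPair [Finite α] {G : Finset ι} {φ : ι → Finset α}
    (hφ : ∀ A ∈ G, IsSharpPair 𝒰 n (φ A) (τ A)) (hG : n.centralBinom ≤ #(G.image φ)) :
    ∃ S, #S = 2 * n ∧ G.image φ = S.powersetCard n := by
  obtain ⟨I, hIG, hinj, himage⟩ := exists_subset_injOn_image_eq_of_surjOn (G : Set ι) (G.image φ)
    (by rw [coe_image]; exact Set.surjOn_image φ G)
  have hI : IsSetPairSystem I φ τ n n :=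
    ⟨fun i hi => (hφ i (hIG hi)).card_left, fun i hi => (hφ i (hIG hi)).card_right,
      fun i hi j hj => ⟨fun hij => hinj hi hj
        ((hφ j (hIG hj)).eq_of_disjoint _ (hφ i (hIG hi)).mem hij),
        fun hij => hij ▸ (hφ i (hIG hi)).disjoint⟩⟩
  have hcard : #I = (n + n).choose n := hI.card_le_choose.antisymm <| by
    rwa [← card_image_of_injOn hinj, himage, ← two_mul]
  simpa only [himage, two_mul] using hI.exists_image_eq_powersetCard hcard

/- Inclusion-exclusion: `U` and `U'` each precede `T` with probability `1 / n.centralBinom`, and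
both do with probability at most `2 / (3 * n.centralBinom)`, as `U ∪ U'` has over `n` points. -/
lemma four_le_mul_dens_of_two_disjoint [Fintype α] {U' : Finset α} (hU : U ∈ 𝒰) (hU' : U' ∈ 𝒰)
    (hne : U ≠ U') (hUn : #U = n) (hUn' : #U' = n) (hT : #T = n) (hUT : Disjoint U T)
    (hUT' : Disjoint U' T) :
    4 ≤ 3 * (n.centralBinom * (𝒰.biUnion (separating · T)).dens) := by
  have hlt : n < #(U ∪ U') := by
    by_contra! hle
    have hUeq := eq_of_subset_of_card_le (subset_union_left (s₁ := U) (s₂ := U')) (by lia)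
    have hUeq' := eq_of_subset_of_card_le (subset_union_right (s₁ := U) (s₂ := U')) (by lia)
    exact hne (hUeq.trans hUeq'.symm)
  have hn : 0 < n := Nat.pos_of_ne_zero fun hn => hne <| by
    rw [card_eq_zero.1 (hUn.trans hn), card_eq_zero.1 (hUn'.trans hn)]
  have hd := choose_mul_dens_separating hUT
  have hd' := choose_mul_dens_separating hUT'
  have hdu := choose_mul_dens_separating (disjoint_union_left.2 ⟨hUT, hUT'⟩)
  rw [hUn, hT, ← two_mul, ← Nat.centralBinom_eq_two_mul_choose] at hd
  rw [hUn', hT, ← two_mul, ← Nat.centralBinom_eq_two_mul_choose] at hd'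
  have hinter : 3 * (n.centralBinom * (separating (U ∪ U') T).dens) ≤ 2 := calc
    3 * (n.centralBinom * (separating (U ∪ U') T).dens)
      = (3 * n.centralBinom : ℕ) * (separating (U ∪ U') T).dens := by push_cast; ring
    _ ≤ (2 * (#(U ∪ U') + n).choose #(U ∪ U') : ℕ) * (separating (U ∪ U') T).dens := by
        gcongr ((?_ : ℕ) : ℚ≥0) * _; exact three_mul_centralBinom_le_two_mul_choose hn hlt
    _ = 2 := by rw [← hT, Nat.cast_mul, mul_assoc, hdu]; norm_num
  have hsub : separating U T ∪ separating U' T ⊆ 𝒰.biUnion (separating · T) :=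
    union_subset (subset_biUnion_of_mem (separating · T) hU)
      (subset_biUnion_of_mem (separating · T) hU')
  have hie := dens_union_add_dens_inter (separating U T) (separating U' T)
  rw [← separating_union_left] at hie
  calc (4 : ℚ≥0) ≤ 3 * (n.centralBinom * (separating U T ∪ separating U' T).dens) := by
        refine le_of_add_le_add_right ((add_le_add_right hinter 4).trans_eq ?_)
        rw [← mul_add, ← mul_add, hie, mul_add, hd, hd']
        norm_num
    _ ≤ 3 * (n.centralBinom * (𝒰.biUnion (separating · T)).dens) := by gcongr

lemma four_le_mul_dens_of_forall_not_isSharpPair [Fintype α] (h𝒰 : ∀ U ∈ 𝒰, #U ≤ n) (hT : #T ≤ n)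
    (hU : ∃ U ∈ 𝒰, Disjoint U T) (hns : ∀ U, ¬ IsSharpPair 𝒰 n U T) :
    4 ≤ 3 * (n.centralBinom * (𝒰.biUnion (separating · T)).dens) := by
  by_cases hsmall : ∃ U ∈ 𝒰, Disjoint U T ∧ #U + #T < 2 * n
  · obtain ⟨U, hU, hUT, hlt⟩ := hsmall
    have hone := one_le_choose_mul_dens_biUnion_separating hU hUT
    calc (4 : ℚ≥0)
        ≤ 3 * (2 * 1) := by norm_num
      _ ≤ 3 * (2 * ((#U + #T).choose #U * (𝒰.biUnion (separating · T)).dens)) := by gcongr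
      _ = 3 * ((2 * (#U + #T).choose #U : ℕ) * (𝒰.biUnion (separating · T)).dens) := by
        push_cast; ring
      _ ≤ 3 * (n.centralBinom * (𝒰.biUnion (separating · T)).dens) := by
        gcongr; exact two_mul_choose_add_le_centralBinom hlt
  · push Not at hsmall
    have hcard : ∀ U ∈ 𝒰, Disjoint U T → #U = n ∧ #T = n := fun U hU hUT => by
      have := hsmall U hU hUT
      have := h𝒰 U hU
      lia
    obtain ⟨U, hU, hUT⟩ := hU
    obtain ⟨hUn, hTn⟩ := hcard U hU hUT
    obtain ⟨U', hU', hUT', hne⟩ : ∃ U' ∈ 𝒰, Disjoint U' T ∧ U' ≠ U := by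
      by_contra! huniq
      exact hns U ⟨hU, hUn, hTn, hUT, huniq⟩
    exact four_le_mul_dens_of_two_disjoint hU hU' hne.symm hUn (hcard U' hU' hUT').1 hTn hUT hUT'

variable [Finite α] {F : Finset ι}

lemma three_mul_card_add_card_le {B : Finset ι} (hBF : B ⊆ F)
    (hτ : ∀ A ∈ F, #(τ A) ≤ n) (h𝒰 : ∀ U ∈ 𝒰, #U ≤ n) (hdisj : ∀ A ∈ F, ∃ U ∈ 𝒰, Disjoint U (τ A))
    (hw : ∀ U ∈ 𝒰, #{A ∈ F | Disjoint U (τ A)} ≤ w)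
    (hB : ∀ A ∈ B, ∀ U, ¬ IsSharpPair 𝒰 n U (τ A)) :
    3 * #F + #B ≤ 3 * (n.centralBinom * w) := by
  classical
  have := Fintype.ofFinite α
  let d (A : ι) : ℚ≥0 := 3 * (n.centralBinom * (𝒰.biUnion (separating · (τ A))).dens)
  have hthree : ∀ A ∈ F \ B, 3 ≤ d A := fun A hA => by
    have hAF := (mem_sdiff.1 hA).1
    obtain ⟨U, hU, hUT⟩ := hdisj A hAF
    calc (3 : ℚ≥0)
        ≤ 3 * ((#U + #(τ A)).choose #U * (𝒰.biUnion (separating · (τ A))).dens) :=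
          le_mul_of_one_le_right (by positivity)
            (one_le_choose_mul_dens_biUnion_separating hU hUT)
      _ ≤ d A := by
          dsimp only [d]
          gcongr
          exact choose_add_le_centralBinom (by linarith [h𝒰 U hU, hτ A hAF])
  have hfour : ∀ A ∈ B, 4 ≤ d A := fun A hA =>
    four_le_mul_dens_of_forall_not_isSharpPair h𝒰 (hτ A (hBF hA)) (hdisj A (hBF hA)) (hB A hA)
  have hcard : #F = #(F \ B) + #B := (card_sdiff_add_card_eq_card hBF).symm
  have hsum : (3 * #F + #B : ℚ≥0) ≤ 3 * (n.centralBinom * w) := calc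
    (3 * #F + #B : ℚ≥0) = #(F \ B) • 3 + #B • 4 := by
        rw [hcard]; push_cast [nsmul_eq_mul]; ring
    _ ≤ ∑ A ∈ F \ B, d A + ∑ A ∈ B, d A :=
        add_le_add (card_nsmul_le_sum _ _ _ hthree) (card_nsmul_le_sum _ _ _ hfour)
    _ = 3 * (n.centralBinom * ∑ A ∈ F, (𝒰.biUnion (separating · (τ A))).dens) := by
        rw [sum_sdiff hBF, ← mul_sum, ← mul_sum]
    _ ≤ 3 * (n.centralBinom * w) := by
        gcongr; exact sum_dens_biUnion_separating_le F τ 𝒰 hw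
  exact_mod_cast hsum

lemma card_le_centralBinom_mul {F : Finset (Finset α)} (hF : ∀ A ∈ F, #A = n)
    (hdisj : ∀ A ∈ F, ∃ B ∈ F, Disjoint A B) (hw : ∀ A ∈ F, #{B ∈ F | Disjoint A B} ≤ w) :
    #F ≤ n.centralBinom * w := by
  classical
  have := three_mul_card_add_card_le (B := ∅) (τ := id) (𝒰 := F) (empty_subset F)
    (fun A hA => (hF A hA).le) (fun A hA => (hF A hA).le)
    (fun A hA => by simpa only [id, disjoint_comm] using hdisj A hA) hw (by simp)
  simp only [card_empty] at this
  lia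

lemma exists_subset_isSharpPair (hτ : ∀ A ∈ F, #(τ A) ≤ n) (h𝒰 : ∀ U ∈ 𝒰, #U ≤ n)
    (hdisj : ∀ A ∈ F, ∃ U ∈ 𝒰, Disjoint U (τ A))
    (hw : ∀ U ∈ 𝒰, #{A ∈ F | Disjoint U (τ A)} ≤ w) :
    ∃ G ⊆ F, ∃ φ : ι → Finset α, (∀ A ∈ G, IsSharpPair 𝒰 n (φ A) (τ A)) ∧
      4 * #F ≤ 3 * (n.centralBinom * w) + #G := by
  classical
  choose! φ hφ using fun A (hA : A ∈ {A ∈ F | ∃ U, IsSharpPair 𝒰 n U (τ A)}) =>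
    (mem_filter.1 hA).2
  refine ⟨_, filter_subset _ F, φ, hφ, ?_⟩
  have hrest := three_mul_card_add_card_le (B := {A ∈ F | ¬ ∃ U, IsSharpPair 𝒰 n U (τ A)})
    (filter_subset _ F) hτ h𝒰 hdisj hw fun A hA => not_exists.1 (mem_filter.1 hA).2
  have hsplit := card_filter_add_card_filter_not (s := F) fun A => ∃ U, IsSharpPair 𝒰 n U (τ A)
  lia

lemma exists_dominant_set {s δ : ℕ} (hτ : ∀ A ∈ F, #(τ A) ≤ n) (h𝒰 : ∀ U ∈ 𝒰, #U ≤ n)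
    (hdisj : ∀ A ∈ F, ∃ U ∈ 𝒰, Disjoint U (τ A))
    (hw : ∀ U ∈ 𝒰, #{A ∈ F | Disjoint U (τ A)} ≤ s + δ) (hF : (s + 1) * n.centralBinom ≤ #F)
    (hδ : 12 * n.centralBinom * δ ≤ s) :
    ∃ S : Finset α, #S = 2 * n ∧ ∀ V ∈ S.powersetCard n, 2 * s ≤ 3 * #{A ∈ F | V ⊆ τ A} := by
  obtain ⟨G, hGF, φ, hφ, hG⟩ := exists_subset_isSharpPair hτ h𝒰 hdisj hw
  have hCpos := n.centralBinom_pos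
  have hfiber : ∀ U ∈ G.image φ, #{A ∈ G | φ A = U} ≤ s + δ := by
    refine forall_mem_image.2 fun A hA => (card_le_card fun B hB => ?_).trans (hw _ (hφ A hA).mem)
    obtain ⟨hBG, hBA⟩ := mem_filter.1 hB
    exact mem_filter.2 ⟨hGF hBG, hBA ▸ (hφ B hBG).disjoint⟩
  have hlarge : n.centralBinom ≤ #(G.image φ) := by
    have := card_le_mul_card_image G (s + δ) hfiber
    by_contra! hlt
    nlinarith
  obtain ⟨S, hS, himage⟩ := exists_image_eq_powersetCard_of_isSharpPair hφ hlarge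
  refine ⟨S, hS, fun V hV => ?_⟩
  obtain ⟨hVS, hVn⟩ := mem_powersetCard.1 hV
  have hW : S \ V ∈ G.image φ := himage ▸ mem_powersetCard.2
    ⟨sdiff_subset, by rw [card_sdiff_of_subset hVS]; lia⟩
  have hcount := card_le_card_fiber_add (fun A hA => mem_image_of_mem φ hA) hW hfiber
  have hsub : #{A ∈ G | φ A = S \ V} ≤ #{A ∈ F | V ⊆ τ A} := card_le_card fun A hA => by
    obtain ⟨hAG, hAW⟩ := mem_filter.1 hA
    refine mem_filter.2 ⟨hGF hAG, fun x hx => ?_⟩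
    have hsharp := hAW ▸ hφ A hAG
    refine sdiff_subset_of_isSharpPair hsharp (hVn ▸ card_pos.2 ⟨x, hx⟩) sdiff_subset ?_ ?_
    · rw [← himage]
      exact image_subset_iff.2 fun B hB => (hφ B hB).mem
    · rwa [Finset.sdiff_sdiff_eq_self hVS]
  rw [himage, card_powersetCard, hS, ← Nat.centralBinom_eq_two_mul_choose] at hcount
  have hle : s + δ ≤ n.centralBinom * (s + δ) := Nat.le_mul_of_pos_left _ hCpos
  rw [Nat.sub_mul, one_mul] at hcount
  lia

end Stability

section Cores

open Finset

variable {α : Type*} [DecidableEq α] {F G : Finset (Finset α)} {k m q : ℕ} {A B T X Y Z : Finset α}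

lemma card_filter_subset_le_one (hF : ∀ A ∈ F, #A = k) (hT : k ≤ #T) :
    #{A ∈ F | T ⊆ A} ≤ 1 := by
  have heq : ∀ A ∈ F, T ⊆ A → T = A := fun A hA hTA =>
    eq_of_subset_of_card_le hTA (by rwa [hF A hA])
  refine card_le_one.2 fun A hA B hB => ?_
  rw [mem_filter] at hA hB
  exact (heq A hA.1 hA.2).symm.trans (heq B hB.1 hB.2)

lemma sum_card_filter_subset_le (hF : ∀ A ∈ F, #A = k) (𝒯 : Finset (Finset α)) :
    ∑ T ∈ 𝒯, #{A ∈ F | T ⊆ A} ≤ 2 ^ k * #F := by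
  have hcomm := sum_card_bipartiteAbove_eq_sum_card_bipartiteBelow (s := 𝒯) (t := F) (· ⊆ ·)
  simp only [bipartiteAbove, bipartiteBelow] at hcomm
  rw [hcomm, mul_comm, ← smul_eq_mul]
  refine sum_le_card_nsmul _ _ _ fun A hA => ?_
  rw [← hF A hA, ← card_powerset]
  exact card_le_card fun T hT => mem_powerset.2 (mem_filter.1 hT).2

/-- A *core* of the family `F` inside `X`: a subset `T` of `X` contained in at least a proportion
`q ^ (-#T)` of `F`, such that adding any element of `X` divides its degree by at least `q`. -/
structure IsCore (F : Finset (Finset α)) (q : ℕ) (X T : Finset α) : Prop where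
  subset : T ⊆ X
  card_le : #F ≤ #{A ∈ F | T ⊆ A} * q ^ #T
  card_insert_mul_le : ∀ x ∈ X, x ∉ T → #{A ∈ F | insert x T ⊆ A} * q ≤ #{A ∈ F | T ⊆ A}

/-- A *kernel* of the family `F`: a set `U` contained in members of `F` that avoid, outside `U`, any
prescribed set of at most `m` elements. -/
def IsKernel (F : Finset (Finset α)) (m : ℕ) (U : Finset α) : Prop :=
  ∀ Z : Finset α, #Z ≤ m → ∃ B ∈ F, U ⊆ B ∧ Disjoint (B \ U) Z

lemma exists_isCore (F : Finset (Finset α)) (q : ℕ) (X : Finset α) : ∃ T, IsCore F q X T := by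
  obtain ⟨T, -, hT, hmax⟩ := exists_le_maximal
    {T ∈ X.powerset | #F ≤ #{A ∈ F | T ⊆ A} * q ^ #T} (a := ∅) (by simp)
  obtain ⟨hTX, hcard⟩ := mem_filter.1 hT
  rw [mem_powerset] at hTX
  refine ⟨T, hTX, hcard, fun x hx hxT => ?_⟩
  by_contra! hlt
  refine hxT (hmax (mem_filter.2 ⟨mem_powerset.2 (insert_subset hx hTX), hcard.trans ?_⟩)
    (subset_insert x T) (mem_insert_self x T))
  rw [card_insert_of_notMem hxT, pow_succ', ← mul_assoc]
  gcongr

namespace IsCore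

lemma mono (h : IsCore F q Y T) (hTX : T ⊆ X) (hXY : X ⊆ Y) : IsCore F q X T :=
  ⟨hTX, h.card_le, fun x hx => h.card_insert_mul_le x (hXY hx)⟩

lemma card_lt (h : IsCore F q X T) (hF : ∀ A ∈ F, #A = k) (hq : q ^ k < #F) : #T < k := by
  have hpos : 0 < #{A ∈ F | T ⊆ A} := Nat.pos_of_ne_zero fun h₀ => by
    have := h.card_le
    rw [h₀, zero_mul] at this
    lia
  obtain ⟨A, hA⟩ := card_pos.1 hpos
  obtain ⟨hAF, hTA⟩ := mem_filter.1 hA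
  refine (hF A hAF ▸ card_le_card hTA).lt_of_ne fun hTk => hq.not_ge ?_
  calc #F ≤ #{A ∈ F | T ⊆ A} * q ^ k := hTk ▸ h.card_le
    _ ≤ 1 * q ^ k := by gcongr; exact card_filter_subset_le_one hF hTk.ge
    _ = q ^ k := one_mul _

end IsCore

lemma card_filter_not_disjoint_sdiff_mul_le (hGF : G ⊆ F) (hG : ∀ A ∈ G, IsCore F q A T)
    (Z : Finset α) : #{A ∈ G | ¬ Disjoint Z (A \ T)} * q ≤ #Z * #{A ∈ F | T ⊆ A} := by
  have hsub : {A ∈ G | ¬ Disjoint Z (A \ T)} ⊆ Z.biUnion fun x => {A ∈ G | x ∈ A ∧ x ∉ T} :=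
    fun A hA => by
      obtain ⟨hAG, hZA⟩ := mem_filter.1 hA
      obtain ⟨x, hxZ, hxA⟩ := not_disjoint_iff.1 hZA
      exact mem_biUnion.2 ⟨x, hxZ, mem_filter.2 ⟨hAG, mem_sdiff.1 hxA⟩⟩
  have hterm : ∀ x ∈ Z, #{A ∈ G | x ∈ A ∧ x ∉ T} * q ≤ #{A ∈ F | T ⊆ A} := fun x _ => by
    obtain hempty | ⟨A, hA⟩ := {A ∈ G | x ∈ A ∧ x ∉ T}.eq_empty_or_nonempty
    · simp [hempty]
    obtain ⟨hAG, hxA, hxT⟩ := mem_filter.1 hA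
    refine le_trans ?_ ((hG A hAG).card_insert_mul_le x hxA hxT)
    gcongr
    intro B hB
    obtain ⟨hBG, hxB, -⟩ := mem_filter.1 hB
    exact mem_filter.2 ⟨hGF hBG, insert_subset hxB (hG B hBG).subset⟩
  calc #{A ∈ G | ¬ Disjoint Z (A \ T)} * q ≤ (∑ x ∈ Z, #{A ∈ G | x ∈ A ∧ x ∉ T}) * q := by
        gcongr; exact (card_le_card hsub).trans card_biUnion_le
    _ ≤ #Z * #{A ∈ F | T ⊆ A} := by
        rw [sum_mul, ← smul_eq_mul]; exact sum_le_card_nsmul _ _ _ hterm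

lemma exists_isKernel (hF : ∀ A ∈ F, #A = k) (hm : (m + 1) ^ k < #F) :
    ∃ U, #U < k ∧ IsKernel F m U := by
  obtain ⟨U, hU⟩ := exists_isCore F (m + 1) (F.biUnion id)
  refine ⟨U, hU.card_lt hF hm, fun Z hZ => ?_⟩
  by_contra! hmeet
  have hcore : ∀ B ∈ {B ∈ F | U ⊆ B}, IsCore F (m + 1) B U := fun B hB => by
    obtain ⟨hBF, hUB⟩ := mem_filter.1 hB
    exact hU.mono hUB (subset_biUnion_of_mem id hBF)
  have hle := card_filter_not_disjoint_sdiff_mul_le (filter_subset _ F) hcore Z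
  rw [filter_true_of_mem fun B hB => by
    rw [disjoint_comm]; exact hmeet B (mem_filter.1 hB).1 (mem_filter.1 hB).2] at hle
  have hzero : #{B ∈ F | U ⊆ B} = 0 := by nlinarith
  have := hU.card_le
  rw [hzero, zero_mul] at this
  lia

lemma card_image_le_of_isCore {τ : Finset α → Finset α} (hF : ∀ A ∈ F, #A = k) (hq : 0 < q)
    (hτ : ∀ A ∈ F, IsCore F q A (τ A)) : #(F.image τ) ≤ 2 ^ k * q ^ k := by
  obtain rfl | hne := F.eq_empty_or_nonempty
  · simp
  refine Nat.le_of_mul_le_mul_right ?_ (card_pos.2 hne)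
  calc #(F.image τ) * #F ≤ ∑ T ∈ F.image τ, #{A ∈ F | T ⊆ A} * q ^ k := by
        rw [← smul_eq_mul]
        refine card_nsmul_le_sum _ _ _ (forall_mem_image.2 fun A hA => (hτ A hA).card_le.trans ?_)
        gcongr
        exact (card_le_card (hτ A hA).subset).trans_eq (hF A hA)
    _ ≤ 2 ^ k * #F * q ^ k := by
        rw [← sum_mul]; gcongr; exact sum_card_filter_subset_le hF _
    _ = 2 ^ k * q ^ k * #F := by ring

lemma card_filter_disjoint_core_mul_le {τ : Finset α → Finset α} (hF : ∀ A ∈ F, #A = k)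
    (hτ : ∀ A ∈ F, IsCore F q A (τ A)) (B : Finset α) :
    #{A ∈ F | Disjoint B (τ A) ∧ ¬ Disjoint B A} * q ≤ #B * (2 ^ k * #F) := by
  have hfiber : ∀ T ∈ F.image τ, #{A ∈ {A ∈ F | Disjoint B (τ A) ∧ ¬ Disjoint B A} | τ A = T} * q ≤
      #B * #{A ∈ F | T ⊆ A} := fun T _ => by
    refine le_trans ?_ (card_filter_not_disjoint_sdiff_mul_le (filter_subset (τ · = T) F)
      (fun A hA => (mem_filter.1 hA).2 ▸ hτ A (mem_filter.1 hA).1) B)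
    gcongr
    intro A hA
    simp only [mem_filter] at hA ⊢
    obtain ⟨⟨hAF, hBτ, hBA⟩, rfl⟩ := hA
    refine ⟨⟨hAF, rfl⟩, fun hdisj => hBA ?_⟩
    rw [← sdiff_union_of_subset (hτ A hAF).subset]
    exact disjoint_union_right.2 ⟨hdisj, hBτ⟩
  calc #{A ∈ F | Disjoint B (τ A) ∧ ¬ Disjoint B A} * q
      = ∑ T ∈ F.image τ, #{A ∈ {A ∈ F | Disjoint B (τ A) ∧ ¬ Disjoint B A} | τ A = T} * q := by
        rw [← sum_mul, ← card_eq_sum_card_fiberwise fun A hA =>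
          mem_image_of_mem τ (mem_filter.1 hA).1]
    _ ≤ #B * ∑ T ∈ F.image τ, #{A ∈ F | T ⊆ A} := by rw [mul_sum]; exact sum_le_sum hfiber
    _ ≤ #B * (2 ^ k * #F) := by gcongr; exact sum_card_filter_subset_le hF _

end Cores

section Extremal

open Finset

variable {α : Type*} [DecidableEq α] {F : Finset (Finset α)} {n s : ℕ} {A S T V : Finset α}

lemma card_filter_subset_not_disjoint_le (hF : ∀ A ∈ F, #A = n + 1) (hV : #V = n)
    (hVA : Disjoint V A) : #{B ∈ F | V ⊆ B ∧ ¬ Disjoint A B} ≤ #A := by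
  refine (card_le_card fun B hB => ?_).trans (card_image_le (s := A) (f := (insert · V)))
  obtain ⟨hBF, hVB, hAB⟩ := mem_filter.1 hB
  obtain ⟨x, hxA, hxB⟩ := not_disjoint_iff.1 hAB
  have hxV : x ∉ V := disjoint_right.1 hVA hxA
  exact mem_image.2 ⟨x, hxA, eq_of_subset_of_card_le (insert_subset hxB hVB)
    (by rw [card_insert_of_notMem hxV, hV, hF B hBF])⟩

lemma card_filter_erase_subset_disjoint_le (hF : ∀ A ∈ F, #A = n + 1) (hT : #T = n + 1)
    (hs : #{B ∈ F | Disjoint A B} ≤ s) {a b : α} (hab : a ≠ b) :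
    #{B ∈ F | T.erase a ⊆ B ∧ Disjoint A B} + #{B ∈ F | T.erase b ⊆ B ∧ Disjoint A B} ≤ s + 1 := by
  rw [← card_union_add_card_inter]
  refine add_le_add (le_trans (card_le_card fun B hB => ?_) hs)
    (le_trans (card_le_card fun B hB => ?_) (card_filter_subset_le_one hF hT.ge))
  all_goals simp only [mem_union, mem_inter, mem_filter] at hB ⊢
  · tauto
  · refine ⟨hB.1.1, fun x hx => ?_⟩
    obtain rfl | hxa := eq_or_ne x a
    · exact hB.2.2.1 (mem_erase.2 ⟨hab, hx⟩)
    · exact hB.1.2.1 (mem_erase.2 ⟨hxa, hx⟩)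

/- If `A` met `S` in fewer than `n` points, then `S \ A` would contain an `(n + 1)`-set `T`. Two
`n`-subsets of `T` have degree at least `2s/3` each, mostly through edges avoiding `A`, and at most
one edge contains both: too many edges avoid `A`. -/
lemma le_card_inter_of_dominant (hF : ∀ A ∈ F, #A = n + 1)
    (hs : ∀ A ∈ F, #{B ∈ F | Disjoint A B} ≤ s) (hns : 6 * n + 12 < s) (hS : #S = 2 * n)
    (hdom : ∀ V ∈ S.powersetCard n, 2 * s ≤ 3 * #{A ∈ F | V ⊆ A}) (hA : A ∈ F) :
    n ≤ #(A ∩ S) := by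
  by_contra! hlt
  have hdiff : n + 1 ≤ #(S \ A) := by
    have := card_sdiff_add_card_inter S A
    rw [inter_comm] at this
    lia
  obtain ⟨T, hTSA, hT⟩ := exists_subset_card_eq hdiff
  obtain ⟨a, ha, b, hb, hab⟩ := one_lt_card.1 (show 1 < #T by lia)
  have hbound : ∀ x ∈ T, 2 * s ≤ 3 * (#{B ∈ F | T.erase x ⊆ B ∧ Disjoint A B} + (n + 1)) :=
    fun x hx => by
    have herase : #(T.erase x) = n := by rw [card_erase_of_mem hx, hT, Nat.add_sub_cancel]
    have hTA : Disjoint (T.erase x) A :=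
      sdiff_disjoint.mono_left ((erase_subset x T).trans hTSA)
    have hlarge := hdom _ (mem_powersetCard.2
      ⟨(erase_subset x T).trans (hTSA.trans sdiff_subset), herase⟩)
    have hmeet := card_filter_subset_not_disjoint_le hF herase hTA
    have hsplit := card_filter_add_card_filter_not (s := {B ∈ F | T.erase x ⊆ B}) (Disjoint A ·)
    rw [filter_filter, filter_filter] at hsplit
    rw [hF A hA] at hmeet
    lia
  have := card_filter_erase_subset_disjoint_le hF hT (hs A hA) hab
  have := hbound a ha
  have := hbound b hb
  lia

lemma card_inter_eq_of_dominant (hF : ∀ A ∈ F, #A = n + 1)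
    (hdisj : ∀ A ∈ F, ∃ B ∈ F, Disjoint A B) (hs : ∀ A ∈ F, #{B ∈ F | Disjoint A B} ≤ s)
    (hns : 6 * n + 12 < s) (hS : #S = 2 * n)
    (hdom : ∀ V ∈ S.powersetCard n, 2 * s ≤ 3 * #{A ∈ F | V ⊆ A}) (hA : A ∈ F) :
    #(A ∩ S) = n := by
  obtain ⟨B, hB, hAB⟩ := hdisj A hA
  have hAS := le_card_inter_of_dominant hF hs hns hS hdom hA
  have hBS := le_card_inter_of_dominant hF hs hns hS hdom hB
  have hunion : #(A ∩ S ∪ B ∩ S) ≤ #S :=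
    card_le_card (union_subset inter_subset_right inter_subset_right)
  rw [card_union_of_disjoint (hAB.mono inter_subset_left inter_subset_left)] at hunion
  lia

/- Only the edge `insert x V`, with `{x} = A \ S`, contains `V` and meets `A`. -/
lemma card_filter_subset_le_of_disjoint (hF : ∀ A ∈ F, #A = n + 1)
    (hinter : ∀ A ∈ F, #(A ∩ S) = n) (hs : #{B ∈ F | Disjoint A B} ≤ s) (hA : A ∈ F)
    (hV : V ∈ S.powersetCard n) (hAV : Disjoint V A) : #{B ∈ F | V ⊆ B} ≤ s + 1 := by
  obtain ⟨hVS, hVn⟩ := mem_powersetCard.1 hV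
  obtain ⟨x, hx⟩ : ∃ x, A \ S = {x} := card_eq_one.1 (by
    have := card_sdiff_add_card_inter A S
    rw [hF A hA, hinter A hA] at this
    lia)
  have hsub : {B ∈ F | V ⊆ B} ⊆ insert (insert x V) {B ∈ F | Disjoint A B} := fun B hB => by
    obtain ⟨hBF, hVB⟩ := mem_filter.1 hB
    rw [mem_insert, mem_filter, or_iff_not_imp_right]
    intro hmeet
    obtain ⟨y, hyA, hyB⟩ := not_disjoint_iff.1 fun hAB => hmeet ⟨hBF, hAB⟩
    have hyV : y ∉ V := disjoint_right.1 hAV hyA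
    have hBS : V = B ∩ S :=
      eq_of_subset_of_card_le (subset_inter hVB hVS) (by rw [hinter B hBF, hVn])
    have hyS : y ∉ S := fun hyS => hyV (hBS ▸ mem_inter.2 ⟨hyB, hyS⟩)
    obtain rfl : y = x := mem_singleton.1 (hx ▸ mem_sdiff.2 ⟨hyA, hyS⟩)
    exact (eq_of_subset_of_card_le (insert_subset hyB hVB)
      (by rw [card_insert_of_notMem hyV, hVn, hF B hBF])).symm
  exact (card_le_card hsub).trans ((card_insert_le _ _).trans (by gcongr))

lemma card_filter_subset_eq_of_le (hinter : ∀ A ∈ F, #(A ∩ S) = n)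
    (hle : ∀ V ∈ S.powersetCard n, #{A ∈ F | V ⊆ A} ≤ s)
    (hF : s * (#S).choose n ≤ #F) : ∀ V ∈ S.powersetCard n, #{A ∈ F | V ⊆ A} = s := by
  refine (sum_eq_sum_iff_of_le hle).1 ((sum_le_sum hle).antisymm ?_)
  calc ∑ _ ∈ S.powersetCard n, s = s * (#S).choose n := by
        rw [sum_const, card_powersetCard, smul_eq_mul, mul_comm]
    _ ≤ #F := hF
    _ = ∑ V ∈ S.powersetCard n, #{A ∈ F | A ∩ S = V} :=
        card_eq_sum_card_fiberwise fun A hA => mem_powersetCard.2 ⟨inter_subset_right, hinter A hA⟩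
    _ ≤ ∑ V ∈ S.powersetCard n, #{A ∈ F | V ⊆ A} := by
        gcongr with V hV A
        rintro rfl
        exact inter_subset_left

lemma extremal_of_dominant (hF : ∀ A ∈ F, #A = n + 1) (hdisj : ∀ A ∈ F, ∃ B ∈ F, Disjoint A B)
    (hs : ∀ A ∈ F, #{B ∈ F | Disjoint A B} ≤ s) (hns : 6 * n + 12 < s) (hS : #S = 2 * n)
    (hdom : ∀ V ∈ S.powersetCard n, 2 * s ≤ 3 * #{A ∈ F | V ⊆ A})
    (hcard : (s + 1) * n.centralBinom ≤ #F) :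
    (∀ A ∈ F, #(A ∩ S) = n) ∧ ∀ V ∈ S.powersetCard n, #{A ∈ F | V ⊆ A} = s + 1 := by
  have hinter : ∀ A ∈ F, #(A ∩ S) = n := fun A hA =>
    card_inter_eq_of_dominant hF hdisj hs hns hS hdom hA
  refine ⟨hinter, card_filter_subset_eq_of_le hinter (fun V hV => ?_) (hS ▸ hcard)⟩
  obtain ⟨hVS, hVn⟩ := mem_powersetCard.1 hV
  have hW : #(S \ V) = n := by rw [card_sdiff_of_subset hVS]; lia
  obtain ⟨A, hA⟩ : {A ∈ F | S \ V ⊆ A}.Nonempty := card_pos.1 (by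
    have := hdom _ (mem_powersetCard.2 ⟨sdiff_subset, hW⟩)
    lia)
  obtain ⟨hAF, hWA⟩ := mem_filter.1 hA
  have hAS : S \ V = A ∩ S :=
    eq_of_subset_of_card_le (subset_inter hWA sdiff_subset) (by rw [hinter A hAF, hW])
  have hVA : Disjoint V A := disjoint_left.2 fun x hxV hxA =>
    (mem_sdiff.1 (hAS ▸ mem_inter.2 ⟨hxA, hVS hxV⟩)).2 hxV
  exact card_filter_subset_le_of_disjoint hF hinter (hs A hAF) hAF hV hVA

end Extremal

section AlmostIntersecting

open Finset

variable {α : Type*} [DecidableEq α] {F : Finset (Finset α)}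

/-- The rate at which cores of edges are taken for `(n + 1)`-uniform families. It makes the edges
that meet a given edge but whose cores avoid it a proportion `1 / (12 * n.centralBinom)` of `s`. -/
def coreRate (n : ℕ) : ℕ :=
  12 * n.centralBinom * ((n + 1) * (2 ^ (n + 1) * (n + 1).centralBinom))

/-- A bound on the number of vertices covered by the cores of the edges of an `(n + 1)`-uniform
family, at rate `coreRate n`. -/
def coreCoverBound (n : ℕ) : ℕ :=
  (n + 1) * (2 ^ (n + 1) * coreRate n ^ (n + 1))

lemma coreRate_pos (n : ℕ) : 0 < coreRate n := by
  have := n.centralBinom_pos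
  have := (n + 1).centralBinom_pos
  unfold coreRate
  positivity

/- Some edge `B ⊇ U` avoids every core outside `U`, hence every core that `U` avoids; at most `s`
edges avoid `B`, and few edges meet `B` outside their core. -/
lemma card_filter_disjoint_le_of_isKernel {k q s δ : ℕ} {τ : Finset α → Finset α} {U : Finset α}
    (hF : ∀ A ∈ F, #A = k) (hq : 0 < q) (hτ : ∀ A ∈ F, IsCore F q A (τ A))
    (hU : IsKernel F (k * (2 ^ k * q ^ k)) U) (hs : ∀ A ∈ F, #{B ∈ F | Disjoint A B} ≤ s)
    (hδ : k * (2 ^ k * #F) < (δ + 1) * q) : #{A ∈ F | Disjoint U (τ A)} ≤ s + δ := by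
  have hcover : #((F.image τ).biUnion id) ≤ k * (2 ^ k * q ^ k) := calc
    #((F.image τ).biUnion id) ≤ #(F.image τ) * k :=
      card_biUnion_le_card_mul _ _ _ <| forall_mem_image.2 fun A hA =>
        (card_le_card (hτ A hA).subset).trans_eq (hF A hA)
    _ ≤ k * (2 ^ k * q ^ k) := by
      rw [mul_comm]; gcongr; exact card_image_le_of_isCore hF hq hτ
  obtain ⟨B, hBF, hUB, hBZ⟩ := hU _ hcover
  have hfew : #{A ∈ F | Disjoint B (τ A) ∧ ¬ Disjoint B A} ≤ δ := by
    refine Nat.lt_succ_iff.1 (Nat.lt_of_mul_lt_mul_right (a := q) (hδ.trans_le' ?_))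
    simpa only [hF B hBF] using card_filter_disjoint_core_mul_le hF hτ B
  refine (card_le_card fun A hA => ?_).trans
    ((card_union_le _ _).trans (Nat.add_le_add (hs B hBF) hfew))
  obtain ⟨hAF, hUA⟩ := mem_filter.1 hA
  have hBA : Disjoint B (τ A) := by
    rw [← sdiff_union_of_subset hUB]
    exact disjoint_union_left.2
      ⟨hBZ.mono_right (subset_biUnion_of_mem id (mem_image_of_mem τ hAF)), hUA⟩
  simp only [mem_union, mem_filter]
  tauto

lemma card_mul_lt_mul_coreRate [Finite α] {n s : ℕ} (hF : ∀ A ∈ F, #A = n + 1)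
    (hdisj : ∀ A ∈ F, ∃ B ∈ F, Disjoint A B) (hs : ∀ A ∈ F, #{B ∈ F | Disjoint A B} ≤ s) :
    (n + 1) * (2 ^ (n + 1) * #F) < (s / (12 * n.centralBinom) + 1) * coreRate n := by
  have := Fintype.ofFinite α
  have := n.centralBinom_pos
  have := (n + 1).centralBinom_pos
  calc (n + 1) * (2 ^ (n + 1) * #F)
      ≤ (n + 1) * (2 ^ (n + 1) * ((n + 1).centralBinom * s)) := by
        gcongr; exact card_le_centralBinom_mul hF hdisj hs
    _ = s * ((n + 1) * (2 ^ (n + 1) * (n + 1).centralBinom)) := by ring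
    _ < 12 * n.centralBinom * (s / (12 * n.centralBinom) + 1) *
        ((n + 1) * (2 ^ (n + 1) * (n + 1).centralBinom)) := by
        gcongr
        exact Nat.lt_mul_div_succ s (by positivity)
    _ = (s / (12 * n.centralBinom) + 1) * coreRate n := by rw [coreRate]; ring

lemma exists_extremal_set_of_finite [Finite α] {n s : ℕ} (hF : ∀ A ∈ F, #A = n + 1)
    (hR : ∀ A ∈ F, (coreCoverBound n + 1) ^ (n + 1) < #{B ∈ F | Disjoint A B})
    (hs : ∀ A ∈ F, #{B ∈ F | Disjoint A B} ≤ s) (hqs : coreRate n ^ (n + 1) < s)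
    (hns : 6 * n + 12 < s) (hcard : (s + 1) * n.centralBinom ≤ #F) :
    ∃ S : Finset α, #S = 2 * n ∧ (∀ A ∈ F, #(A ∩ S) = n) ∧
      ∀ V ∈ S.powersetCard n, #{A ∈ F | V ⊆ A} = s + 1 := by
  classical
  have := Fintype.ofFinite α
  have hdisj : ∀ A ∈ F, ∃ B ∈ F, Disjoint A B := fun A hA => by
    obtain ⟨B, hB⟩ := card_pos.1 (Nat.zero_lt_of_lt (hR A hA))
    exact ⟨B, mem_filter.1 hB⟩
  have hsF : s < #F :=
    (Nat.lt_succ_self s).trans_le ((Nat.le_mul_of_pos_right _ n.centralBinom_pos).trans hcard)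
  choose τ hτ using fun A => exists_isCore F (coreRate n) A
  obtain ⟨S, hS, hdom⟩ := exists_dominant_set (F := F) (τ := τ) (n := n) (s := s)
    (δ := s / (12 * n.centralBinom)) (𝒰 := {U | #U ≤ n ∧ IsKernel F (coreCoverBound n) U})
    (fun A _ => Nat.lt_succ_iff.1 ((hτ A).card_lt hF (hqs.trans hsF)))
    (fun U hU => (mem_filter.1 hU).2.1)
    (fun A hA => by
      obtain ⟨U, hUn, hU⟩ := exists_isKernel (fun B hB => hF B (mem_filter.1 hB).1) (hR A hA)
      obtain ⟨B, hB, hUB, -⟩ := hU ∅ (by simp)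
      refine ⟨U, mem_filter.2 ⟨mem_univ _, Nat.lt_succ_iff.1 hUn, fun Z hZ => ?_⟩,
        (mem_filter.1 hB).2.symm.mono hUB (hτ A).subset⟩
      obtain ⟨B, hB, hBU⟩ := hU Z hZ
      exact ⟨B, (mem_filter.1 hB).1, hBU⟩)
    (fun U hU => card_filter_disjoint_le_of_isKernel hF (coreRate_pos n) (fun A _ => hτ A)
      (mem_filter.1 hU).2.2 hs (card_mul_lt_mul_coreRate hF hdisj hs))
    hcard (Nat.mul_div_le s _)
  refine ⟨S, hS, extremal_of_dominant hF hdisj hs hns hS (fun V hV => ?_) hcard⟩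
  exact (hdom V hV).trans (Nat.mul_le_mul_left 3 (card_le_card
    (monotone_filter_right F fun A _ hVA => hVA.trans (hτ A).subset)))

lemma exists_eq_map_subtype {α : Type*} {F : Finset (Finset α)} {X : Finset α}
    (hX : ∀ A ∈ F, A ⊆ X) :
    ∃ F' : Finset (Finset ↥X),
      F = F'.map (mapEmbedding (Function.Embedding.subtype _)).toEmbedding := by
  classical
  refine ⟨F.image fun A => A.subtype (· ∈ X), ?_⟩
  have hmap : ∀ A ∈ F, (A.subtype (· ∈ X)).map (Function.Embedding.subtype _) = A :=
    fun A hA => subtype_map_of_mem (hX A hA)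
  ext A
  simp only [mem_map, mem_image, exists_exists_and_eq_and,
    RelEmbedding.coe_toEmbedding, mapEmbedding_apply]
  exact ⟨fun hA => ⟨A, hA, hmap A hA⟩, fun ⟨B, hB, hBA⟩ => hBA ▸ (hmap B hB).symm ▸ hB⟩

lemma exists_extremal_set {n s : ℕ} (hF : ∀ A ∈ F, #A = n + 1)
    (hR : ∀ A ∈ F, (coreCoverBound n + 1) ^ (n + 1) < #{B ∈ F | Disjoint A B})
    (hs : ∀ A ∈ F, #{B ∈ F | Disjoint A B} ≤ s) (hqs : coreRate n ^ (n + 1) < s)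
    (hns : 6 * n + 12 < s) (hcard : (s + 1) * n.centralBinom ≤ #F) :
    ∃ S : Finset α, #S = 2 * n ∧ (∀ A ∈ F, #(A ∩ S) = n) ∧
      ∀ V ∈ S.powersetCard n, #{A ∈ F | V ⊆ A} = s + 1 := by
  obtain ⟨F', hF'⟩ := exists_eq_map_subtype fun A (hA : A ∈ F) => subset_biUnion_of_mem id hA
  generalize F.biUnion id = X at F' hF'
  subst hF'
  simp only [mem_map, forall_exists_index, and_imp, forall_apply_eq_imp_iff₂,
    RelEmbedding.coe_toEmbedding, mapEmbedding_apply, card_map, filter_map, Function.comp_def,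
    disjoint_map] at hF hR hs hcard ⊢
  obtain ⟨S, hS, hinter, hdeg⟩ := exists_extremal_set_of_finite hF hR hs hqs hns hcard
  refine ⟨S.map (Function.Embedding.subtype _), by rw [card_map, hS], fun A hA => ?_,
    fun T hT => ?_⟩
  · rw [← map_inter, card_map, hinter A hA]
  · rw [powersetCard_map, mem_map] at hT
    obtain ⟨V, hV, rfl⟩ := hT
    simpa using hdeg V hV

end AlmostIntersecting

theorem stmt_8_general (k : ℕ) (hk : 0 < k) :
    ∃ R s0 : ℕ, ∀ s : ℕ, s0 < s →
      ∀ (α : Type u) [DecidableEq α] (F : Finset (Finset α)),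
        (∀ A ∈ F, A.card = k) →
        (∀ A ∈ F, R ≤ (F.filter fun B => Disjoint A B).card ∧
          (F.filter fun B => Disjoint A B).card ≤ s) →
        (s + 1) * Nat.choose (2 * k - 2) (k - 1) ≤ F.card →
        ∃ S : Finset α, S.card = 2 * k - 2 ∧
          (∀ e ∈ F, (e ∩ S).card = k - 1) ∧
          (∀ T ∈ S.powersetCard (k - 1), (F.filter fun e => T ⊆ e).card = s + 1) := by
  obtain ⟨n, rfl⟩ := Nat.exists_eq_add_of_lt hk
  simp only [zero_add, Nat.add_sub_cancel, show 2 * (n + 1) - 2 = 2 * n by lia]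
  exact ⟨(coreCoverBound n + 1) ^ (n + 1) + 1, coreRate n ^ (n + 1) + (6 * n + 12),
    fun s hs α _ F hF hR hcard => exists_extremal_set hF (fun A hA => (hR A hA).1)
      (fun A hA => (hR A hA).2) (by lia) (by lia) hcard⟩

/-- For every `k > 2` there exist constants `R = R(k)` and `s0 = s0(k)`
such that for every `s > s0`: if `F` is a `k`-uniform `[R,s]`-almost intersecting hypergraph
with at least `(s+1) * (2k-2 choose k-1)` edges, then there is a set `S` of `2k-2` vertices
such that every edge of `F` meets `S` in exactly `k-1` elements, and every `(k-1)`-subset of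
`S` lies in exactly `s+1` edges of `F`. -/
theorem stmt_8 (k : ℕ) (hk : 2 < k) :
    ∃ R s0 : ℕ, ∀ s : ℕ, s0 < s →
      ∀ (α : Type u) [DecidableEq α] (F : Finset (Finset α)),
        (∀ A ∈ F, A.card = k) →
        (∀ A ∈ F, R ≤ (F.filter fun B => Disjoint A B).card ∧
          (F.filter fun B => Disjoint A B).card ≤ s) →
        (s + 1) * Nat.choose (2 * k - 2) (k - 1) ≤ F.card →
        ∃ S : Finset α, S.card = 2 * k - 2 ∧
          (∀ e ∈ F, (e ∩ S).card = k - 1) ∧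
          (∀ T ∈ S.powersetCard (k - 1), (F.filter fun e => T ⊆ e).card = s + 1) := by
  exact stmt_8_general k (by lia)
end

section
/- For every integer s > 13, any [1,s]-almost intersecting graph has at most 2s+2 edges. -/
/-!
Suppose the graph `F` has more than `2 * s + 2` edges. By inclusion-exclusion, two disjoint edges
`xp` and `yq` are joined by at least `3 + m` edges, where `m` is the number of edges avoiding both.
So if `x` and `y` are not adjacent, then all the other pairs are, and every edge meets
`{x, p, y, q}`. It follows that nonadjacent non-isolated vertices have the same neighbourhood, which
is a clique meeting every edge. This leaves two cases.

* Some two non-isolated vertices `x`, `y` are not adjacent. As no edge meets all others, the common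
  neighbourhood contains three vertices `p`, `q`, `r`. A further non-isolated vertex would be
  adjacent to `r`, by an edge avoiding `{x, p, y, q}`; hence there are at most five vertices.
* The non-isolated vertices form a clique of size `n`. Each of the `n.choose 2` edges is disjoint
  from `(n - 2).choose 2` others, which is at least half of `n.choose 2 - 2` as soon as `7 ≤ n`.

Either way `F` has at most `15` edges, the size of `K₆`.
-/

open Finset

section Graph

variable {V : Type*} {G : SimpleGraph V} {x y : V}

/-- Whenever `xp` and `yq` are disjoint edges of `G` with `x` and `y` not adjacent, the other three
pairs joining them are edges and no edge avoids both. The pair `xq` is not listed, since it is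
`py` after exchanging the two edges; disjointness amounts to `x ≠ y` and `p ≠ q`. -/
def HasTightCrossings (G : SimpleGraph V) : Prop :=
  ∀ ⦃x y p q⦄, x ≠ y → ¬ G.Adj x y → G.Adj x p → G.Adj y q → p ≠ q →
    G.Adj p y ∧ G.Adj p q ∧ G.IsVertexCover {x, p, y, q}

namespace HasTightCrossings

lemma neighborSet_subset (hG : HasTightCrossings G) (hy : y ∈ G.support) (hxy : ¬ G.Adj x y) :
    G.neighborSet x ⊆ G.neighborSet y := by
  intro p hp
  obtain ⟨q, hyq⟩ := hy
  obtain rfl | hne := eq_or_ne x y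
  · exact hp
  obtain rfl | hpq := eq_or_ne p q
  · exact hyq
  · exact (hG hne hxy hp hyq hpq).1.symm

lemma isClique_neighborSet (hG : HasTightCrossings G) (hy : y ∈ G.support) (hne : x ≠ y)
    (hxy : ¬ G.Adj x y) : G.IsClique (G.neighborSet x) := fun _ hp _ hq hpq ↦
  (hG hne hxy hp (hG.neighborSet_subset hy hxy hq) hpq).2.1

lemma isVertexCover_neighborSet (hG : HasTightCrossings G) (hx : x ∈ G.support) :
    G.IsVertexCover (G.neighborSet x) := by
  intro u v huv
  by_cases hxu : G.Adj x u
  · exact .inl hxu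
  · exact .inr (hG.neighborSet_subset hx (fun h ↦ hxu h.symm) huv)

end HasTightCrossings

lemma exists_mem_notMem_of_isVertexCover {S T : Set V} (hS : G.IsVertexCover S)
    (hT : ¬ G.IsVertexCover T) : ∃ w ∈ S, w ∉ T :=
  Set.not_subset.1 fun h ↦ hT (hS.subset h)

lemma HasTightCrossings.exists_support_subset (hG : HasTightCrossings G)
    (hcover : ∀ u v, G.Adj u v → ¬ G.IsVertexCover {u, v}) (hx : x ∈ G.support)
    (hy : y ∈ G.support) (hne : x ≠ y) (hxy : ¬ G.Adj x y) :
    ∃ p q r, G.support ⊆ {x, p, y, q, r} := by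
  have hclique := hG.isClique_neighborSet hy hne hxy
  have hN := hG.isVertexCover_neighborSet hx
  obtain ⟨p, hxp⟩ := hx
  obtain ⟨q, hxq, hq⟩ := exists_mem_notMem_of_isVertexCover hN (hcover x p hxp)
  have hqp : q ≠ p := fun h ↦ hq (.inr h)
  have hpq : G.Adj p q := hclique hxp hxq hqp.symm
  obtain ⟨r, hxr, hr⟩ := exists_mem_notMem_of_isVertexCover hN (hcover p q hpq)
  have hyq : G.Adj y q := hG.neighborSet_subset hy hxy hxq
  have hyr : G.Adj y r := hG.neighborSet_subset hy hxy hxr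
  refine ⟨p, q, r, fun z hz ↦ by_contra fun hz' ↦ ?_⟩
  simp only [Set.mem_insert_iff, Set.mem_singleton_iff, not_or] at hz'
  obtain ⟨hzx, hzp, hzy, hzq, hzr⟩ := hz'
  have hzr' : G.Adj z r := by
    by_cases hxz : G.Adj x z
    · exact hclique hxz hxr hzr
    · exact hG.neighborSet_subset hz hxz hxr
  have hmeet := (hG hne hxy hxp hyq hqp.symm).2.2 hzr'
  have hrx := G.ne_of_adj hxr
  have hry := G.ne_of_adj hyr
  simp only [Set.mem_insert_iff, Set.mem_singleton_iff] at hmeet hr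
  tauto

end Graph

section SetFamily

variable {α : Type*} {A B C U : Finset α} {F : Finset (Finset α)} {k : ℕ}

lemma card_add_card_filter_and (S : Finset α) (p q : α → Prop) [DecidablePred p]
    [DecidablePred q] :
    #S + #{a ∈ S | p a ∧ q a} = #{a ∈ S | p a} + #{a ∈ S | q a} + #{a ∈ S | ¬ p a ∧ ¬ q a} := by
  classical
  have hunion := card_union_add_card_inter {a ∈ S | p a} {a ∈ S | q a}
  have hcompl := card_filter_add_card_filter_not (s := S) (fun a ↦ p a ∨ q a)
  rw [← filter_or, ← filter_and] at hunion
  simp only [not_or] at hcompl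
  omega

variable [DecidableEq α]

lemma exists_eq_pair_of_not_disjoint (hC : #C = 2) (hAB : Disjoint A B) (hA : ¬ Disjoint A C)
    (hB : ¬ Disjoint B C) : ∃ a ∈ A, ∃ b ∈ B, C = {a, b} := by
  obtain ⟨a, haA, haC⟩ := not_disjoint_iff.1 hA
  obtain ⟨b, hbB, hbC⟩ := not_disjoint_iff.1 hB
  refine ⟨a, haA, b, hbB, (eq_of_subset_of_card_le ?_ ?_).symm⟩
  · simp only [insert_subset_iff, singleton_subset_iff, haC, hbC, and_self]
  · rw [hC, card_pair (disjoint_iff_ne.1 hAB a haA b hbB)]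

lemma card_filter_disjoint_powersetCard (hA : A ⊆ U) :
    #{B ∈ U.powersetCard k | Disjoint A B} = (#U - #A).choose k := by
  rw [← card_sdiff_of_subset hA, ← card_powersetCard]
  congr 1
  ext B
  simp only [mem_filter, mem_powersetCard, subset_sdiff, disjoint_comm]
  tauto

lemma subset_powersetCard_biUnion (hF : (F : Set (Finset α)).Sized k) :
    F ⊆ (F.biUnion id).powersetCard k := fun _ hA ↦
  mem_powersetCard.2 ⟨subset_biUnion_of_mem id hA, hF hA⟩

end SetFamily

section ChooseTwo

lemma succ_choose_two (k : ℕ) : (k + 1).choose 2 = k.choose 2 + k := by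
  rw [Nat.choose_succ_succ' k 1, Nat.choose_one_right, add_comm]

lemma two_mul_le_choose_two {k : ℕ} (hk : 5 ≤ k) : 2 * k ≤ k.choose 2 := by
  induction k, hk using Nat.le_induction with
  | base => decide
  | succ k hk ih =>
    rw [succ_choose_two]
    omega

lemma choose_two_le_max (n : ℕ) : n.choose 2 ≤ max (2 * (n - 2).choose 2 + 2) 15 := by
  obtain hn | hn := le_or_gt n 6
  · exact le_max_of_le_right (Nat.choose_le_choose 2 hn)
  · obtain ⟨k, rfl⟩ := Nat.exists_eq_add_of_le' (show 2 ≤ n by omega)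
    have hk := two_mul_le_choose_two (show 5 ≤ k by omega)
    rw [Nat.add_sub_cancel, succ_choose_two, succ_choose_two]
    omega

end ChooseTwo

section PairGraph

variable {α : Type*} [DecidableEq α] {F : Finset (Finset α)} {s : ℕ}

/-- The simple graph whose edges are the two-element members of the set family `F`. -/
def pairGraph (F : Finset (Finset α)) : SimpleGraph α where
  Adj x y := x ≠ y ∧ {x, y} ∈ F
  symm := ⟨fun x y h ↦ ⟨h.1.symm, pair_comm x y ▸ h.2⟩⟩
  loopless := ⟨fun _ h ↦ h.1 rfl⟩

lemma pairGraph_adj_iff_mem (hF : (F : Set (Finset α)).Sized 2) {x y : α} :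
    (pairGraph F).Adj x y ↔ {x, y} ∈ F :=
  ⟨And.right, fun h ↦ ⟨card_pair_eq_two_iff.1 (hF h), h⟩⟩

lemma support_pairGraph (hF : (F : Set (Finset α)).Sized 2) :
    (pairGraph F).support = F.biUnion id := by
  ext x
  simp only [SimpleGraph.mem_support, pairGraph_adj_iff_mem hF, coe_biUnion, mem_coe, id,
    Set.mem_iUnion, exists_prop]
  constructor
  · rintro ⟨y, hxy⟩
    exact ⟨_, hxy, mem_insert_self x {y}⟩
  · rintro ⟨A, hA, hx⟩
    obtain ⟨y, hy⟩ := card_eq_one.1 ((card_erase_of_mem hx).trans (by rw [hF hA]))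
    exact ⟨y, by rwa [← hy, insert_erase hx]⟩

lemma eq_powersetCard_of_isClique (hF : (F : Set (Finset α)).Sized 2)
    (hclique : (pairGraph F).IsClique (pairGraph F).support) :
    F = (F.biUnion id).powersetCard 2 := by
  refine (subset_powersetCard_biUnion hF).antisymm fun A hA ↦ ?_
  obtain ⟨hAU, hA2⟩ := mem_powersetCard.1 hA
  obtain ⟨x, y, hxy, rfl⟩ := card_eq_two.1 hA2
  rw [support_pairGraph hF] at hclique
  exact (hclique (hAU (by simp)) (hAU (by simp)) hxy).2

lemma not_isVertexCover_of_disjoint {A B : Finset α} (hB : B ∈ F) (hB2 : #B = 2)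
    (hAB : Disjoint A B) : ¬ (pairGraph F).IsVertexCover (A : Set α) := by
  obtain ⟨c, d, hcd, rfl⟩ := card_eq_two.1 hB2
  simp only [disjoint_insert_right, disjoint_singleton_right] at hAB
  exact fun hcover ↦ (hcover ⟨hcd, hB⟩).elim hAB.1 hAB.2

lemma filter_not_disjoint_subset_of_notMem (hF : (F : Set (Finset α)).Sized 2) {x y p q : α}
    (hdisj : Disjoint ({x, p} : Finset α) {y, q}) (hxy : {x, y} ∉ F) :
    {C ∈ F | ¬ Disjoint {x, p} C ∧ ¬ Disjoint {y, q} C} ⊆ {{x, q}, {p, y}, {p, q}} := by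
  intro C hC
  obtain ⟨hCF, hxp, hyq⟩ := mem_filter.1 hC
  obtain ⟨a, ha, b, hb, rfl⟩ := exists_eq_pair_of_not_disjoint (hF hCF) hdisj hxp hyq
  simp only [mem_insert, mem_singleton] at ha hb ⊢
  obtain rfl | rfl := ha <;> obtain rfl | rfl := hb <;> simp_all

lemma hasTightCrossings_pairGraph (hF : (F : Set (Finset α)).Sized 2) (hcard : 2 * s + 2 < #F)
    (hle : ∀ A ∈ F, #{B ∈ F | Disjoint A B} ≤ s) : HasTightCrossings (pairGraph F) := by
  intro x y p q hxy hnadj hxp hyq hpq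
  have hxq : x ≠ q := by rintro rfl; exact hnadj hyq.symm
  have hpy : p ≠ y := by rintro rfl; exact hnadj hxp
  have hdisj : Disjoint ({x, p} : Finset α) {y, q} := by
    simp [hxy.symm, hxq.symm, hpy.symm, hpq.symm]
  have hcross := filter_not_disjoint_subset_of_notMem hF hdisj fun h ↦ hnadj ⟨hxy, h⟩
  have hcount : 3 + #{C ∈ F | Disjoint {x, p} C ∧ Disjoint {y, q} C} ≤
      #{C ∈ F | ¬ Disjoint {x, p} C ∧ ¬ Disjoint {y, q} C} := by
    have := card_add_card_filter_and F (Disjoint {x, p}) (Disjoint {y, q})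
    have := hle _ hxp.2
    have := hle _ hyq.2
    omega
  have hthree : #({{x, q}, {p, y}, {p, q}} : Finset (Finset α)) ≤ 3 := card_le_three
  have hmem : ∀ C ∈ ({{x, q}, {p, y}, {p, q}} : Finset (Finset α)), C ∈ F := fun C hC ↦
    mem_of_mem_filter C (eq_of_subset_of_card_le hcross (by omega) ▸ hC)
  have havoid : {C ∈ F | Disjoint {x, p} C ∧ Disjoint {y, q} C} = ∅ := by
    have := card_le_card hcross
    exact card_eq_zero.1 (by omega)
  refine ⟨⟨hpy, hmem _ (by simp)⟩, ⟨hpq, hmem _ (by simp)⟩, ?_⟩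
  intro u v huv
  have := filter_eq_empty_iff.1 havoid huv.2
  simp only [disjoint_insert_left, disjoint_singleton_left, mem_insert, mem_singleton] at this
  simp only [Set.mem_insert_iff, Set.mem_singleton_iff]
  grind

lemma card_le_choose_two_of_support_subset (hF : (F : Set (Finset α)).Sized 2) {S : Finset α}
    (hS : (pairGraph F).support ⊆ S) : #F ≤ (#S).choose 2 := by
  rw [support_pairGraph hF, coe_subset] at hS
  calc #F ≤ #((F.biUnion id).powersetCard 2) := card_le_card (subset_powersetCard_biUnion hF)
    _ = (#(F.biUnion id)).choose 2 := card_powersetCard _ _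
    _ ≤ (#S).choose 2 := Nat.choose_le_choose 2 (card_le_card hS)

lemma card_le_max_of_isClique (hF : (F : Set (Finset α)).Sized 2)
    (hle : ∀ A ∈ F, #{B ∈ F | Disjoint A B} ≤ s)
    (hclique : (pairGraph F).IsClique (pairGraph F).support) : #F ≤ max (2 * s + 2) 15 := by
  obtain rfl | ⟨A, hA⟩ := F.eq_empty_or_nonempty
  · exact Nat.zero_le _
  have hFU := eq_powersetCard_of_isClique hF hclique
  have hs : (#(F.biUnion id) - 2).choose 2 ≤ s := by
    have hAU : A ⊆ F.biUnion id := subset_biUnion_of_mem id hA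
    have := hle A hA
    rwa [hFU, card_filter_disjoint_powersetCard hAU, hF hA] at this
  calc #F = (#(F.biUnion id)).choose 2 := by rw [← card_powersetCard, ← hFU]
    _ ≤ max (2 * (#(F.biUnion id) - 2).choose 2 + 2) 15 := choose_two_le_max _
    _ ≤ max (2 * s + 2) 15 := by gcongr

end PairGraph

theorem stmt_9_general {α : Type*} [DecidableEq α] (s : ℕ) (F : Finset (Finset α))
    (huniform : ∀ A ∈ F, A.card = 2)
    (hai : ∀ A ∈ F, 1 ≤ (F.filter fun B => Disjoint A B).card ∧
      (F.filter fun B => Disjoint A B).card ≤ s) :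
    F.card ≤ max (2 * s + 2) 15 := by
  have hF : (F : Set (Finset α)).Sized 2 := fun A hA ↦ huniform A hA
  have hle : ∀ A ∈ F, #{B ∈ F | Disjoint A B} ≤ s := fun A hA ↦ (hai A hA).2
  by_cases hclique : (pairGraph F).IsClique (pairGraph F).support
  · exact card_le_max_of_isClique hF hle hclique
  obtain hsmall | hlarge := le_or_gt #F (2 * s + 2)
  · exact le_max_of_le_left hsmall
  obtain ⟨⟨x, hx⟩, ⟨y, hy⟩, hne, hxy⟩ := (pairGraph F).not_isClique_iff.1 hclique
  have hcover : ∀ u v, (pairGraph F).Adj u v → ¬ (pairGraph F).IsVertexCover {u, v} := by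
    intro u v huv
    obtain ⟨B, hB⟩ := card_pos.1 (hai _ huv.2).1
    obtain ⟨hBF, hdisj⟩ := mem_filter.1 hB
    simpa only [coe_pair] using not_isVertexCover_of_disjoint hBF (hF hBF) hdisj
  obtain ⟨p, q, r, hsupp⟩ := (hasTightCrossings_pairGraph hF hlarge hle).exists_support_subset
    hcover hx hy (Subtype.coe_ne_coe.2 hne) hxy
  have hfive : #F ≤ (#{x, p, y, q, r}).choose 2 :=
    card_le_choose_two_of_support_subset hF (by simpa only [coe_insert, coe_singleton] using hsupp)
  calc #F ≤ Nat.choose 5 2 := hfive.trans (Nat.choose_le_choose 2 card_le_five)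
    _ ≤ max (2 * s + 2) 15 := le_max_of_le_right (by decide)

/-- For every `s > 13`, any `[1,s]`-almost intersecting graph has at most
`2s+2` edges. -/
theorem stmt_9 {α : Type*} [DecidableEq α] (s : ℕ) (hs : 13 < s)
    (F : Finset (Finset α))
    (huniform : ∀ A ∈ F, A.card = 2)
    (hai : ∀ A ∈ F, 1 ≤ (F.filter fun B => Disjoint A B).card ∧
      (F.filter fun B => Disjoint A B).card ≤ s) :
    F.card ≤ 2 * s + 2 :=
  (stmt_9_general s F huniform hai).trans (max_le le_rfl (by omega))
end

section
/- For every integer s > 13, any [0,s]-almost intersecting graph that is not a star has at most 2s+3 edges. -/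
/-!
Suppose `F` has `m ≥ 2 * s + 4` edges. An edge meets at least `m - s` edges, itself included, so
the degrees of its two endpoints sum to at least `t = m + 1 - s ≥ m / 2 + 3`, and one endpoint is
heavy, that is, has degree at least `t / 2`. Let `k` be the number of heavy vertices. Their degrees
sum to at most `2 * m` and to at most `m + k.choose 2`, which for `m > 10` forces `k ≤ 4`. Then the
degree of a heavy vertex is at least `k`, so it has a light neighbour. The neighbours of a light
vertex are all heavy, so its degree is at most `k` and every heavy vertex has degree at least
`t - k`. This is compatible with the second bound only for `k = 1`, and then all edges contain the
one heavy vertex.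
-/

open Finset

section FinsetFamily

variable {α : Type*} [DecidableEq α] {F : Finset (Finset α)} {C S : Finset α} {r t : ℕ} {x : α}

/-- The degree of the vertex `v` in the finite hypergraph `F`: the number of edges containing it. -/
def edgeDegree (F : Finset (Finset α)) (v : α) : ℕ := #{e ∈ F | v ∈ e}

/-- The vertices of `F` that account for at least half of a degree sum `t`. The condition is
stated with a factor `2` to avoid rounding `t / 2`. -/
def heavyVertices (F : Finset (Finset α)) (t : ℕ) : Finset α :=
  {v ∈ F.biUnion id | t ≤ 2 * edgeDegree F v}

theorem sum_edgeDegree_eq_sum_card_inter (F : Finset (Finset α)) (S : Finset α) :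
    ∑ v ∈ S, edgeDegree F v = ∑ e ∈ F, #(S ∩ e) := by
  simp only [edgeDegree, card_filter, ← filter_mem_eq_inter]
  exact sum_comm

theorem sum_edgeDegree_le_mul_card (hF : ∀ e ∈ F, #e ≤ r) (S : Finset α) :
    ∑ v ∈ S, edgeDegree F v ≤ r * #F := by
  rw [sum_edgeDegree_eq_sum_card_inter, mul_comm]
  exact sum_le_card_nsmul _ _ _ fun e he => (card_le_card inter_subset_right).trans (hF e he)

theorem sum_edgeDegree_le_mul_card_add_choose (hF : ∀ e ∈ F, #e = r + 1) (S : Finset α) :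
    ∑ v ∈ S, edgeDegree F v ≤ r * #F + (#S).choose (r + 1) := by
  have hinside : #{e ∈ F | e ⊆ S} ≤ (#S).choose (r + 1) := by
    rw [← card_powersetCard]
    refine card_le_card fun e he => ?_
    obtain ⟨heF, heS⟩ := mem_filter.1 he
    exact mem_powersetCard.2 ⟨heS, hF e heF⟩
  have hinter : ∀ e ∈ F, #(S ∩ e) ≤ r + if e ⊆ S then 1 else 0 := by
    intro e he
    split_ifs with heS
    · exact (card_le_card inter_subset_right).trans (hF e he).le
    · have hlt : #(S ∩ e) < #e :=
        card_lt_card (inter_subset_right.ssubset_of_ne fun h => heS (inter_eq_right.1 h))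
      have := hF e he
      omega
  calc ∑ v ∈ S, edgeDegree F v = ∑ e ∈ F, #(S ∩ e) := sum_edgeDegree_eq_sum_card_inter F S
    _ ≤ ∑ e ∈ F, (r + if e ⊆ S then 1 else 0) := sum_le_sum hinter
    _ = r * #F + #{e ∈ F | e ⊆ S} := by
      rw [sum_add_distrib, ← card_filter, sum_const, smul_eq_mul, mul_comm]
    _ ≤ r * #F + (#S).choose (r + 1) := by gcongr

theorem card_add_card_le_card_disjoint_add_sum_edgeDegree {e : Finset α} (he : e ∈ F) :
    #F + #e ≤ #{f ∈ F | Disjoint e f} + ∑ v ∈ e, edgeDegree F v + 1 := by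
  have hmeet : ∀ f ∈ F.erase e, 1 ≤ (if Disjoint e f then 1 else 0) + #(e ∩ f) := by
    intro f _
    split_ifs with hdisj
    · omega
    · rwa [zero_add, Nat.one_le_iff_ne_zero, card_ne_zero, ← not_disjoint_iff_nonempty_inter]
  have hothers : #(F.erase e) ≤ #{f ∈ F | Disjoint e f} + ∑ f ∈ F.erase e, #(e ∩ f) := by
    calc #(F.erase e) ≤ ∑ f ∈ F.erase e, ((if Disjoint e f then 1 else 0) + #(e ∩ f)) := by
          simpa using sum_le_sum hmeet
      _ = #{f ∈ F.erase e | Disjoint e f} + ∑ f ∈ F.erase e, #(e ∩ f) := by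
          rw [sum_add_distrib, ← card_filter]
      _ ≤ #{f ∈ F | Disjoint e f} + ∑ f ∈ F.erase e, #(e ∩ f) := by
          gcongr
          exact erase_subset e F
  have hsplit := add_sum_erase F (fun f => #(e ∩ f)) he
  rw [inter_self, ← sum_edgeDegree_eq_sum_card_inter F e] at hsplit
  have := card_erase_add_one he
  omega

theorem exists_eq_pair_of_card_eq_two {e : Finset α} (he : #e = 2) (hx : x ∈ e) :
    ∃ y, y ≠ x ∧ e = {x, y} := by
  obtain ⟨y, hy, hyx⟩ := exists_mem_ne (by omega : 1 < #e) x
  exact ⟨y, hyx, (eq_of_subset_of_card_le (by simp [insert_subset_iff, hx, hy])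
    (by rw [he, card_pair hyx.symm])).symm⟩

theorem edgeDegree_le_card_of_not_disjoint (hF : ∀ e ∈ F, #e = 2) (hx : x ∉ S)
    (hS : ∀ e ∈ F, x ∈ e → ¬ Disjoint e S) : edgeDegree F x ≤ #S := by
  refine (card_le_card (t := S.image fun y => {x, y}) fun e he => ?_).trans card_image_le
  obtain ⟨heF, hxe⟩ := mem_filter.1 he
  obtain ⟨y, -, rfl⟩ := exists_eq_pair_of_card_eq_two (hF e heF) hxe
  have hy : y ∈ S := by simpa [hx] using hS _ heF hxe
  exact mem_image_of_mem _ hy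

theorem exists_pair_mem_of_card_le_edgeDegree (hF : ∀ e ∈ F, #e = 2) (hx : x ∈ C)
    (hdeg : #C ≤ edgeDegree F x) : ∃ y ∉ C, {x, y} ∈ F := by
  by_contra! hall
  refine (card_erase_lt_of_mem hx).not_ge (hdeg.trans ?_)
  refine edgeDegree_le_card_of_not_disjoint hF (notMem_erase x C) fun e he hxe => ?_
  obtain ⟨y, hyx, rfl⟩ := exists_eq_pair_of_card_eq_two (hF e he) hxe
  have hy : y ∈ C := by_contra fun hy => hall y hy he
  exact not_disjoint_iff.2 ⟨y, by simp, mem_erase.2 ⟨hyx, hy⟩⟩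

theorem le_edgeDegree_add_card_of_cover (hF : ∀ e ∈ F, #e = 2) (hC : ∀ e ∈ F, ¬ Disjoint e C)
    (hsum : ∀ e ∈ F, t ≤ ∑ v ∈ e, edgeDegree F v) (hx : x ∈ C) (hdeg : #C ≤ edgeDegree F x) :
    t ≤ edgeDegree F x + #C := by
  obtain ⟨y, hy, hxy⟩ := exists_pair_mem_of_card_le_edgeDegree hF hx hdeg
  have hne : x ≠ y := fun h => hy (h ▸ hx)
  calc t ≤ edgeDegree F x + edgeDegree F y := by simpa [sum_pair hne] using hsum _ hxy
    _ ≤ edgeDegree F x + #C := by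
      gcongr
      exact edgeDegree_le_card_of_not_disjoint hF hy fun e he _ => hC e he

theorem not_disjoint_heavyVertices (hF : ∀ e ∈ F, #e = 2)
    (hsum : ∀ e ∈ F, t ≤ ∑ v ∈ e, edgeDegree F v) {e : Finset α} (he : e ∈ F) :
    ¬ Disjoint e (heavyVertices F t) := by
  intro hdisj
  have hlight : ∀ v ∈ e, 2 * edgeDegree F v < t := fun v hv => by
    by_contra! hv'
    exact disjoint_left.1 hdisj hv (mem_filter.2 ⟨mem_biUnion.2 ⟨e, he, hv⟩, hv'⟩)
  have hlt := sum_lt_sum_of_nonempty (card_pos.1 (by rw [hF e he]; norm_num)) hlight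
  rw [← mul_sum, sum_const, hF e he, smul_eq_mul] at hlt
  have := hsum e he
  omega

theorem card_heavyVertices_mul_le (F : Finset (Finset α)) (t : ℕ) :
    #(heavyVertices F t) * t ≤ 2 * ∑ v ∈ heavyVertices F t, edgeDegree F v := by
  rw [mul_sum]
  exact card_nsmul_le_sum _ _ _ fun v hv => (mem_filter.1 hv).2

theorem two_mul_sum_edgeDegree_add_card_le (hF : ∀ e ∈ F, #e = 2) (S : Finset α) :
    2 * ∑ v ∈ S, edgeDegree F v + #S ≤ 2 * #F + #S * #S := by
  have hchoose : 2 * (#S).choose 2 + #S = #S * #S := by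
    qify
    rw [Nat.cast_choose_two]
    ring
  have hbound : ∑ v ∈ S, edgeDegree F v ≤ 1 * #F + (#S).choose 2 :=
    sum_edgeDegree_le_mul_card_add_choose hF S
  omega

theorem card_heavyVertices_le_four (hF : ∀ e ∈ F, #e = 2) (hcard : 10 < #F)
    (ht : #F + 6 ≤ 2 * t) : #(heavyVertices F t) ≤ 4 := by
  have hheavy := card_heavyVertices_mul_le F t
  have htwo := sum_edgeDegree_le_mul_card (fun e he => (hF e he).le) (heavyVertices F t)
  have hone := two_mul_sum_edgeDegree_add_card_le hF (heavyVertices F t)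
  generalize #(heavyVertices F t) = k at *
  have hmul := Nat.mul_le_mul_left k ht
  by_contra! hk
  have hF_le : #F ≤ 2 * k := by
    have : #F * (k - 4) ≤ 2 * k * (k - 4) := by
      zify [hk.le]
      nlinarith
    exact Nat.le_of_mul_le_mul_right this (by omega)
  have hk_le : k ≤ 5 := by
    have : k * #F ≤ 5 * #F := by nlinarith
    exact Nat.le_of_mul_le_mul_right this (by omega)
  omega

theorem card_heavyVertices_le_one (hF : ∀ e ∈ F, #e = 2) (hcard : 10 < #F)
    (ht : #F + 6 ≤ 2 * t) (hsum : ∀ e ∈ F, t ≤ ∑ v ∈ e, edgeDegree F v) :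
    #(heavyVertices F t) ≤ 1 := by
  have hfour := card_heavyVertices_le_four hF hcard ht
  have hdeg : ∀ v ∈ heavyVertices F t, t ≤ edgeDegree F v + #(heavyVertices F t) := fun v hv => by
    have := (mem_filter.1 hv).2
    exact le_edgeDegree_add_card_of_cover hF (fun e => not_disjoint_heavyVertices hF hsum)
      hsum hv (by omega)
  have hlower := card_nsmul_le_sum _ _ t hdeg
  rw [sum_add_distrib, sum_const, smul_eq_mul, smul_eq_mul] at hlower
  have hupper := two_mul_sum_edgeDegree_add_card_le hF (heavyVertices F t)
  generalize #(heavyVertices F t) = k at *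
  have hmul := Nat.mul_le_mul_left k ht
  by_contra! hk
  -- The bounds combine to `(k - 2) * (#F + 1 - 3 * k) + 2 ≤ 0`.
  have hprod : 0 ≤ ((k : ℤ) - 2) * (#F + 1 - 3 * k) := mul_nonneg (by omega) (by omega)
  zify at *
  nlinarith

theorem exists_forall_mem_of_le_sum_edgeDegree (hF : ∀ e ∈ F, #e = 2) (hcard : 10 < #F)
    (ht : #F + 6 ≤ 2 * t) (hsum : ∀ e ∈ F, t ≤ ∑ v ∈ e, edgeDegree F v) :
    ∃ v : α, ∀ e ∈ F, v ∈ e := by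
  have hmeet := fun e he => not_disjoint_iff.1 (not_disjoint_heavyVertices hF hsum (e := e) he)
  obtain ⟨e₀, he₀⟩ : F.Nonempty := card_pos.1 (by omega)
  obtain ⟨v, -, hv⟩ := hmeet e₀ he₀
  refine ⟨v, fun e he => ?_⟩
  obtain ⟨w, hwe, hw⟩ := hmeet e he
  rwa [card_le_one.1 (card_heavyVertices_le_one hF hcard ht hsum) v hv w hw]

end FinsetFamily

-- The complete graph on five vertices, with `10` edges, violates the bound for `s = 3`.
theorem stmt_12_general {α : Type*} [DecidableEq α] (s : ℕ) (hs : 3 < s)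
    (F : Finset (Finset α))
    (huniform : ∀ A ∈ F, A.card = 2)
    (hai : ∀ A ∈ F, (F.filter fun B => Disjoint A B).card ≤ s)
    (hstar : ¬ ∃ v : α, ∀ e ∈ F, v ∈ e) :
    F.card ≤ 2 * s + 3 := by
  by_contra! hlt
  refine hstar (exists_forall_mem_of_le_sum_edgeDegree (t := #F + 1 - s) huniform
    (by omega) (by omega) fun e he => ?_)
  have hdisj := hai e he
  have hmeet := card_add_card_le_card_disjoint_add_sum_edgeDegree he
  have htwo := huniform e he
  omega

/-- For every `s > 13`, any `[0,s]`-almost intersecting graph that is not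
a star has at most `2s+3` edges. -/
theorem stmt_12 {α : Type*} [DecidableEq α] (s : ℕ) (hs : 13 < s)
    (F : Finset (Finset α))
    (huniform : ∀ A ∈ F, A.card = 2)
    (hai : ∀ A ∈ F, (F.filter fun B => Disjoint A B).card ≤ s)
    (hstar : ¬ ∃ v : α, ∀ e ∈ F, v ∈ e) :
    F.card ≤ 2 * s + 3 :=
  stmt_12_general s (by omega) F huniform hai hstar
end

section
/- Let s > 625 and let F be a 3-uniform [0,s]-almost intersecting hypergraph such that for every edge e ∈ F and every two vertices x, y ∈ e, there is an edge of F disjoint from {x,y}. Then F has at most 6s+10 edges. -/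
/-!
Suppose `#F > 6 * s + 10`. Every edge meets all but at most `s` edges, so the degree of a set `S` is
at most `s` plus the sum of the degrees of `insert b S` over the vertices `b` of any edge. Hence
pairs have degree at most `s + 3` and vertices at most `4 * s + 9`, while double counting disjoint
pairs of edges shows that the maximum degree, attained at `x` say, is at least about `14 * s / 5`.

Call `y` heavy if `{y, x}` has degree above roughly `s / 2`. An edge avoiding `x` with at most one
heavy vertex has all its vertices in a set of bounded size, so there are boundedly many such edges;
if there were at most two heavy vertices, this would make `F` too small. So there are three heavy
vertices `a`, `b`, `c`. Every edge avoiding `x` meets each pair of them, every edge through `x`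
contains one of them, and therefore every edge has two vertices in `K = {x, a, b, c}`.

Finally, at most four edges lie inside `K`, and for each of the three partitions of `K` into two
pairs at most `2 * s + 2` edges have one of these pairs as their trace on `K`.
-/

open Finset

section

variable {α : Type*} {s k m t : ℕ} {F : Finset (Finset α)} {B S T H K P e : Finset α} {b c x y : α}

lemma exists_edge_notMem (hF : (F : Set (Finset α)).Sized 3)
    (hpair : ∀ e ∈ F, ∀ x ∈ e, ∀ y ∈ e, x ≠ y → ∃ g ∈ F, x ∉ g ∧ y ∉ g)
    (hne : F.Nonempty) (x : α) : ∃ B ∈ F, x ∉ B := by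
  obtain ⟨e, he⟩ := hne
  by_cases hxe : x ∈ e
  · obtain ⟨y, hye, hyx⟩ := exists_mem_ne (by rw [hF he]; norm_num) x
    obtain ⟨g, hg, hxg, -⟩ := hpair e he x hxe y hye hyx.symm
    exact ⟨g, hg, hxg⟩
  · exact ⟨e, he, hxe⟩

variable [DecidableEq α]

/-- The degree of a vertex set `S` in the hypergraph `F`: the number of edges containing `S`. The
degree of a vertex `x` is `setDegree F {x}`, the codegree of `x` and `y` is `setDegree F {x, y}`. -/
def setDegree (F : Finset (Finset α)) (S : Finset α) : ℕ := #{e ∈ F | S ⊆ e}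

/-- A `[0, s]`-almost intersecting hypergraph: every edge is disjoint from at most `s` edges. -/
def IsAlmostIntersecting (s : ℕ) (F : Finset (Finset α)) : Prop :=
  ∀ A ∈ F, #{B ∈ F | Disjoint A B} ≤ s

/-- The vertices `y ≠ x` whose codegree with `x` is at least `t`. Restricting to vertices of `F`
makes this a finite set and changes nothing for `0 < t`. -/
def codegreeNbhd (F : Finset (Finset α)) (x : α) (t : ℕ) : Finset α :=
  {y ∈ F.biUnion id | y ≠ x ∧ t ≤ setDegree F {y, x}}

lemma sdiff_mem_powersetCard (hP : P ∈ K.powersetCard k) : K \ P ∈ K.powersetCard (#K - k) := by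
  obtain ⟨hPK, hcard⟩ := mem_powersetCard.1 hP
  exact mem_powersetCard.2 ⟨sdiff_subset, by rw [card_sdiff_of_subset hPK, hcard]⟩

lemma setDegree_empty : setDegree F ∅ = #F := by
  simp [setDegree]

lemma setDegree_le_one (hF : (F : Set (Finset α)).Sized k) (hS : k ≤ #S) : setDegree F S ≤ 1 := by
  refine card_le_one.2 fun e he f hf => ?_
  rw [mem_filter] at he hf
  rw [← eq_of_subset_of_card_le he.2 ((hF he.1).trans_le hS),
    ← eq_of_subset_of_card_le hf.2 ((hF hf.1).trans_le hS)]

lemma card_superset_meeting_le_sum :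
    #{e ∈ F | S ⊆ e ∧ ¬Disjoint T e} ≤ ∑ b ∈ T, setDegree F (insert b S) := by
  refine le_trans (card_le_card fun e he => ?_) card_biUnion_le
  obtain ⟨heF, hSe, hTe⟩ := mem_filter.1 he
  obtain ⟨b, hbT, hbe⟩ := not_disjoint_iff.1 hTe
  exact mem_biUnion.2 ⟨b, hbT, mem_filter.2 ⟨heF, insert_subset hbe hSe⟩⟩

lemma card_superset_meeting_le_card (hF : (F : Set (Finset α)).Sized k) (hS : k ≤ #S + 1)
    (hST : Disjoint S T) : #{e ∈ F | S ⊆ e ∧ ¬Disjoint T e} ≤ #T := by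
  have hdeg : ∀ b ∈ T, setDegree F (insert b S) ≤ 1 := fun b hb =>
    setDegree_le_one hF (by rwa [card_insert_of_notMem (disjoint_right.1 hST hb)])
  simpa using card_superset_meeting_le_sum.trans (sum_le_card_nsmul T _ 1 hdeg)

lemma card_superset_disjoint_add_card_superset_meeting :
    #{e ∈ F | S ⊆ e ∧ Disjoint T e} + #{e ∈ F | S ⊆ e ∧ ¬Disjoint T e} = setDegree F S := by
  simp only [← filter_filter]
  exact card_filter_add_card_filter_not _

lemma setDegree_le_card_superset_disjoint_add (hF : (F : Set (Finset α)).Sized k)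
    (hS : k ≤ #S + 1) (hST : Disjoint S T) :
    setDegree F S ≤ #{e ∈ F | S ⊆ e ∧ Disjoint T e} + #T := by
  rw [← card_superset_disjoint_add_card_superset_meeting (T := T)]
  exact Nat.add_le_add_left (card_superset_meeting_le_card hF hS hST) _

lemma card_add_setDegree_pair :
    #F + setDegree F {y, x} =
      setDegree F {x} + setDegree F {y} + #{e ∈ F | Disjoint {y, x} e} := by
  have hunion := card_union_add_card_inter {e ∈ F | y ∈ e} {e ∈ F | x ∈ e}
  have hsplit := card_filter_add_card_filter_not (s := F) fun e => y ∈ e ∨ x ∈ e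
  simp only [← filter_or, ← filter_and, not_or] at hunion hsplit
  simp only [setDegree, insert_subset_iff, singleton_subset_iff, disjoint_insert_left,
    disjoint_singleton_left]
  lia

lemma exists_forall_setDegree_singleton_le [Nonempty α] (F : Finset (Finset α)) :
    ∃ x, ∀ y, setDegree F {y} ≤ setDegree F {x} := by
  have hbdd : BddAbove (Set.range fun y => setDegree F {y}) :=
    ⟨#F, Set.forall_mem_range.2 fun _ => card_filter_le _ _⟩
  obtain ⟨x, hx⟩ := Nat.sSup_mem (Set.range_nonempty _) hbdd
  exact ⟨x, fun y => (le_csSup hbdd ⟨y, rfl⟩).trans_eq hx.symm⟩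

lemma sum_setDegree_union_powersetCard (F : Finset (Finset α)) (S T : Finset α) (m : ℕ) :
    ∑ P ∈ T.powersetCard m, setDegree F (S ∪ P) = ∑ e ∈ F with S ⊆ e, (#(T ∩ e)).choose m := by
  have hcount := sum_card_bipartiteAbove_eq_sum_card_bipartiteBelow (s := T.powersetCard m)
    (t := {e ∈ F | S ⊆ e}) (· ⊆ ·)
  simp only [bipartiteAbove, bipartiteBelow, filter_filter, ← union_subset_iff] at hcount
  refine hcount.trans (sum_congr rfl fun e _ => ?_)
  rw [← card_powersetCard]
  congr 1
  ext P
  simp only [mem_filter, mem_powersetCard, subset_inter_iff]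
  tauto

-- Bonferroni's inequality for the families of edges containing `insert b S`, `b ∈ T`.
lemma sum_setDegree_insert_le (hF : (F : Set (Finset α)).Sized k) (hS : k ≤ #S + 2)
    (hST : Disjoint S T) :
    ∑ b ∈ T, setDegree F (insert b S) ≤ setDegree F S + (#T).choose 2 := by
  have hsingle : ∑ b ∈ T, setDegree F (insert b S) = ∑ e ∈ F with S ⊆ e, #(T ∩ e) := by
    simpa [powersetCard_one] using sum_setDegree_union_powersetCard F S T 1
  have hpair : ∑ P ∈ T.powersetCard 2, setDegree F (S ∪ P) ≤ (#T).choose 2 := by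
    rw [← card_powersetCard, card_eq_sum_ones]
    refine sum_le_sum fun P hP => setDegree_le_one hF ?_
    obtain ⟨hPT, hP2⟩ := mem_powersetCard.1 hP
    rwa [card_union_of_disjoint (hST.mono_right hPT), hP2]
  have hchoose (n : ℕ) : n ≤ 1 + n.choose 2 := by
    cases n with
    | zero => simp
    | succ n => rw [Nat.choose_succ_succ', Nat.choose_one_right]; lia
  calc ∑ b ∈ T, setDegree F (insert b S)
      = ∑ e ∈ F with S ⊆ e, #(T ∩ e) := hsingle
    _ ≤ ∑ e ∈ F with S ⊆ e, (1 + (#(T ∩ e)).choose 2) := sum_le_sum fun _ _ => hchoose _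
    _ = setDegree F S + ∑ P ∈ T.powersetCard 2, setDegree F (S ∪ P) := by
      rw [sum_add_distrib, ← card_eq_sum_ones, sum_setDegree_union_powersetCard, setDegree]
    _ ≤ setDegree F S + (#T).choose 2 := Nat.add_le_add_left hpair _

lemma mem_codegreeNbhd (ht : 0 < t) :
    y ∈ codegreeNbhd F x t ↔ y ≠ x ∧ t ≤ setDegree F {y, x} := by
  refine mem_filter.trans (and_iff_right_of_imp fun h => ?_)
  obtain ⟨e, he⟩ := card_pos.1 (ht.trans_le h.2)
  obtain ⟨heF, hyxe⟩ := mem_filter.1 he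
  exact mem_biUnion.2 ⟨e, heF, hyxe (mem_insert_self y _)⟩

lemma card_codegreeNbhd_lt (hF : (F : Set (Finset α)).Sized 3)
    (h : setDegree F {x} + m.choose 2 < m * t) : #(codegreeNbhd F x t) < m := by
  by_contra! hm
  obtain ⟨M, hM, rfl⟩ := exists_subset_card_eq hm
  have hMx : ∀ y ∈ M, y ≠ x ∧ t ≤ setDegree F {y, x} := fun y hy => (mem_filter.1 (hM hy)).2
  have hupper := sum_setDegree_insert_le hF (S := {x}) (T := M) (by simp)
    (disjoint_singleton_left.2 fun hx => (hMx x hx).1 rfl)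
  have hlower := card_nsmul_le_sum M (fun y => setDegree F {y, x}) t fun y hy => (hMx y hy).2
  exact (hlower.trans hupper).not_gt h

lemma card_two_le_card_inter_le (hcodeg : ∀ x y, x ≠ y → setDegree F {x, y} ≤ m) (hH : #H ≤ 2) :
    #{e ∈ F | 2 ≤ #(e ∩ H)} ≤ m := by
  have hsubset : ∀ {e : Finset α}, 2 ≤ #(e ∩ H) → H ⊆ e := fun h =>
    inter_eq_right.1 (eq_of_subset_of_card_le inter_subset_right (hH.trans h))
  rcases hH.lt_or_eq with hlt | hcard
  · rw [filter_false_of_mem fun e _ h => ((h.trans (card_le_card inter_subset_right)).trans_lt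
      hlt).false, card_empty]
    exact m.zero_le
  · obtain ⟨a, b, hab, rfl⟩ := card_eq_two.1 hcard
    exact (card_le_card (monotone_filter_right F fun _ _ => hsubset)).trans (hcodeg a b hab)

lemma card_inter_eq_le (hcodeg : ∀ x y, x ≠ y → setDegree F {x, y} ≤ m)
    (hP : P ∈ K.powersetCard 2) : #{e ∈ F | e ∩ K = P} ≤ m := by
  obtain ⟨a, b, hab, rfl⟩ := card_eq_two.1 (mem_powersetCard.1 hP).2
  refine (card_le_card (monotone_filter_right F fun e _ he => ?_)).trans (hcodeg a b hab)
  exact (show e ∩ K = {a, b} from he) ▸ inter_subset_left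

namespace IsAlmostIntersecting

lemma card_superset_disjoint_le (hai : IsAlmostIntersecting s F) (hB : B ∈ F) :
    #{e ∈ F | S ⊆ e ∧ Disjoint B e} ≤ s :=
  (card_le_card (monotone_filter_right F fun _ _ => And.right)).trans (hai B hB)

lemma setDegree_le_add_sum (hai : IsAlmostIntersecting s F) (hB : B ∈ F) :
    setDegree F S ≤ s + ∑ b ∈ B, setDegree F (insert b S) := by
  rw [← card_superset_disjoint_add_card_superset_meeting (T := B)]
  exact Nat.add_le_add (hai.card_superset_disjoint_le hB) card_superset_meeting_le_sum

lemma setDegree_le_add (hai : IsAlmostIntersecting s F) (hF : (F : Set (Finset α)).Sized k)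
    (hS : k ≤ #S + 1) (hB : B ∈ F) (hSB : Disjoint S B) : setDegree F S ≤ s + k := by
  have hdeg := setDegree_le_card_superset_disjoint_add hF hS hSB
  rw [hF hB] at hdeg
  exact hdeg.trans (Nat.add_le_add_right (hai.card_superset_disjoint_le hB) k)

lemma setDegree_pair_le (hai : IsAlmostIntersecting s F) (hF : (F : Set (Finset α)).Sized 3)
    (hpair : ∀ e ∈ F, ∀ x ∈ e, ∀ y ∈ e, x ≠ y → ∃ g ∈ F, x ∉ g ∧ y ∉ g) (hxy : x ≠ y) :
    setDegree F {x, y} ≤ s + 3 := by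
  rcases (setDegree F {x, y}).eq_zero_or_pos with hzero | hpos
  · lia
  · obtain ⟨e, he⟩ := card_pos.1 hpos
    simp only [mem_filter, insert_subset_iff, singleton_subset_iff] at he
    obtain ⟨g, hg, hxg, hyg⟩ := hpair e he.1 x he.2.1 y he.2.2 hxy
    exact hai.setDegree_le_add hF (by rw [card_pair hxy]) hg (by simp [hxg, hyg])

lemma setDegree_singleton_le (hai : IsAlmostIntersecting s F) (hF : (F : Set (Finset α)).Sized k)
    (hcodeg : ∀ x y, x ≠ y → setDegree F {x, y} ≤ m) (hB : B ∈ F) (hx : x ∉ B) :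
    setDegree F {x} ≤ s + k * m := by
  have hsum := sum_le_card_nsmul B (fun b => setDegree F {b, x}) m fun b hb =>
    hcodeg b x (ne_of_mem_of_not_mem hb hx)
  rw [hF hB] at hsum
  exact (hai.setDegree_le_add_sum hB).trans (Nat.add_le_add_left hsum s)

-- Double counting of the pairs of disjoint edges `(B, e)` with `B` disjoint from `S` and `S ⊆ e`.
lemma card_disjoint_mul_le (hai : IsAlmostIntersecting s F) (hF : (F : Set (Finset α)).Sized k)
    (hS : k ≤ #S + 1) : #{B ∈ F | Disjoint S B} * (setDegree F S - k) ≤ setDegree F S * s := by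
  refine card_mul_le_card_mul (t := {e ∈ F | S ⊆ e}) Disjoint (fun B hB => ?_) fun e he => ?_
  · obtain ⟨hBF, hSB⟩ := mem_filter.1 hB
    rw [bipartiteAbove, filter_filter, Nat.sub_le_iff_le_add, ← hF hBF]
    exact setDegree_le_card_superset_disjoint_add hF hS hSB
  · refine le_trans (card_le_card fun B hB => ?_) (hai e (mem_filter.1 he).1)
    obtain ⟨hB, hBe⟩ := mem_filter.1 hB
    exact mem_filter.2 ⟨(mem_filter.1 hB).1, hBe.symm⟩

lemma setDegree_insert_add_setDegree_insert_le (hai : IsAlmostIntersecting s F)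
    (hF : (F : Set (Finset α)).Sized k) (hS : k ≤ #S + 2) (hb : b ∉ S) (hc : c ∉ S) (hbc : b ≠ c)
    (hB : B ∈ F) (hdisj : Disjoint (insert b (insert c S)) B) :
    setDegree F (insert b S) + setDegree F (insert c S) ≤ s + 2 * k + 1 := by
  have hdeg_b := setDegree_le_card_superset_disjoint_add (S := insert b S) hF
    (by rw [card_insert_of_notMem hb]; lia)
    (hdisj.mono_left (insert_subset_insert b (subset_insert c S)))
  have hdeg_c := setDegree_le_card_superset_disjoint_add (S := insert c S) hF
    (by rw [card_insert_of_notMem hc]; lia) (hdisj.mono_left (subset_insert b _))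
  rw [hF hB] at hdeg_b hdeg_c
  have hunion_inter := card_union_add_card_inter
    {e ∈ F | insert b S ⊆ e ∧ Disjoint B e} {e ∈ F | insert c S ⊆ e ∧ Disjoint B e}
  rw [← filter_or, ← filter_and] at hunion_inter
  have hunion : #{e ∈ F | insert b S ⊆ e ∧ Disjoint B e ∨ insert c S ⊆ e ∧ Disjoint B e} ≤ s :=
    (card_le_card (monotone_filter_right F fun _ _ h => h.elim And.right And.right)).trans
      (hai B hB)
  have hinter :
      #{e ∈ F | (insert b S ⊆ e ∧ Disjoint B e) ∧ insert c S ⊆ e ∧ Disjoint B e} ≤ 1 := by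
    refine (card_le_card (monotone_filter_right F fun e _ h => ?_)).trans
      (setDegree_le_one (S := insert b (insert c S)) hF ?_)
    · exact insert_subset (h.1.1 (mem_insert_self b S)) h.2.1
    · rwa [card_insert_of_notMem (by simp [hb, hbc]), card_insert_of_notMem hc]
  lia

lemma card_inter_eq_sdiff_le (hai : IsAlmostIntersecting s F) (hF : (F : Set (Finset α)).Sized k)
    (he : e ∈ F) (hK : k ≤ #(K \ e) + 1) : #{f ∈ F | f ∩ K = K \ e} ≤ s + #(e \ K) := by
  have hmeet : #{f ∈ F | K \ e ⊆ f ∧ ¬Disjoint (e \ K) f} ≤ #(e \ K) :=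
    card_superset_meeting_le_card hF hK (disjoint_sdiff_sdiff)
  refine le_trans (card_le_card (t := {f ∈ F | Disjoint e f} ∪
    {f ∈ F | K \ e ⊆ f ∧ ¬Disjoint (e \ K) f}) fun f hf => ?_)
    ((card_union_le _ _).trans (Nat.add_le_add (hai e he) hmeet))
  obtain ⟨hfF, hfK⟩ := mem_filter.1 hf
  simp only [mem_union, mem_filter, hfF, true_and, or_iff_not_imp_left, not_disjoint_iff]
  rintro ⟨v, hve, hvf⟩
  have hvK : v ∉ K := fun hvK =>
    (mem_sdiff.1 (hfK ▸ mem_inter.2 ⟨hvf, hvK⟩)).2 hve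
  exact ⟨hfK ▸ inter_subset_left, v, mem_sdiff.2 ⟨hve, hvK⟩, hvf⟩

lemma card_inter_eq_add_card_inter_eq_sdiff_le (hai : IsAlmostIntersecting s F) (hs : 1 ≤ s)
    (hF : (F : Set (Finset α)).Sized 3) (hcodeg : ∀ x y, x ≠ y → setDegree F {x, y} ≤ s + 3)
    (hK : #K = 4) (hP : P ∈ K.powersetCard 2) :
    #{e ∈ F | e ∩ K = P} + #{e ∈ F | e ∩ K = K \ P} ≤ 2 * s + 2 := by
  have hPc : K \ P ∈ K.powersetCard 2 := by simpa [hK] using sdiff_mem_powersetCard hP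
  have hopposite {Q : Finset α} (hQ : Q ∈ K.powersetCard 2) {e : Finset α} (he : e ∈ F)
      (heQ : e ∩ K = Q) : #{f ∈ F | f ∩ K = K \ Q} ≤ s + 1 := by
    subst heQ
    have hle := hai.card_inter_eq_sdiff_le (K := K) hF he
    rw [← sdiff_inter_self_left, inter_comm K e,
      (mem_powersetCard.1 (sdiff_mem_powersetCard hQ)).2, hK] at hle
    have hcard := card_sdiff_add_card_inter e K
    rw [hF he, (mem_powersetCard.1 hQ).2] at hcard
    exact (hle le_rfl).trans (by lia)
  have hP_le := card_inter_eq_le hcodeg hP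
  have hPc_le := card_inter_eq_le hcodeg hPc
  rcases eq_empty_or_nonempty {e ∈ F | e ∩ K = P} with hempty | ⟨e, he⟩
  · rw [hempty, card_empty]
    lia
  rcases eq_empty_or_nonempty {e ∈ F | e ∩ K = K \ P} with hempty | ⟨f, hf⟩
  · rw [hempty, card_empty]
    lia
  have hPc_le' := hopposite hP (mem_filter.1 he).1 (mem_filter.1 he).2
  have hP_le' := hopposite hPc (mem_filter.1 hf).1 (mem_filter.1 hf).2
  rw [Finset.sdiff_sdiff_eq_self (mem_powersetCard.1 hP).1] at hP_le'
  lia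

lemma card_le_of_two_le_card_inter (hai : IsAlmostIntersecting s F) (hs : 1 ≤ s)
    (hF : (F : Set (Finset α)).Sized 3) (hcodeg : ∀ x y, x ≠ y → setDegree F {x, y} ≤ s + 3)
    (hK : #K = 4) (htwo : ∀ e ∈ F, 2 ≤ #(e ∩ K)) : #F ≤ 6 * s + 10 := by
  have hcover : F ⊆ K.powersetCard 3 ∪
      (K.powersetCard 2).biUnion fun P => {e ∈ F | e ∩ K = P} := by
    intro e he
    rcases (htwo e he).eq_or_lt with h2 | h3
    · exact mem_union_right _ (mem_biUnion.2 ⟨e ∩ K,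
        mem_powersetCard.2 ⟨inter_subset_right, h2.symm⟩, mem_filter.2 ⟨he, rfl⟩⟩)
    · refine mem_union_left _ (mem_powersetCard.2 ⟨?_, hF he⟩)
      exact inter_eq_left.1 (eq_of_subset_of_card_le inter_subset_left ((hF he).trans_le h3))
  have hsum_compl : ∑ P ∈ K.powersetCard 2, #{e ∈ F | e ∩ K = K \ P} =
      ∑ P ∈ K.powersetCard 2, #{e ∈ F | e ∩ K = P} := by
    have hcompl : ∀ P ∈ K.powersetCard 2, K \ P ∈ K.powersetCard 2 := fun P hP => by
      simpa [hK] using sdiff_mem_powersetCard hP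
    have hinv : ∀ P ∈ K.powersetCard 2, K \ (K \ P) = P := fun P hP =>
      Finset.sdiff_sdiff_eq_self (mem_powersetCard.1 hP).1
    exact sum_nbij' (K \ ·) (K \ ·) hcompl hcompl hinv hinv fun _ _ => rfl
  have hsum := sum_le_card_nsmul (K.powersetCard 2) _ (2 * s + 2) fun P hP =>
    hai.card_inter_eq_add_card_inter_eq_sdiff_le hs hF hcodeg hK hP
  rw [sum_add_distrib, hsum_compl, card_powersetCard, hK, show Nat.choose 4 2 = 6 from rfl,
    smul_eq_mul] at hsum
  have hcard := (card_le_card hcover).trans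
    ((card_union_le _ _).trans (Nat.add_le_add_left card_biUnion_le _))
  rw [card_powersetCard, hK, show Nat.choose 4 3 = 4 from rfl] at hcard
  lia

lemma card_sdiff_le_one (hai : IsAlmostIntersecting s F) (hF : (F : Set (Finset α)).Sized 3)
    (hH : ∀ b ∈ H, b ≠ x ∧ s + 8 ≤ 2 * setDegree F {b, x}) (hB : B ∈ F) (hx : x ∉ B) :
    #(H \ B) ≤ 1 := by
  by_contra! hlt
  obtain ⟨b, hb, c, hc, hbc⟩ := one_lt_card.1 hlt
  rw [mem_sdiff] at hb hc
  obtain ⟨hbx, hdeg_b⟩ := hH b hb.1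
  obtain ⟨hcx, hdeg_c⟩ := hH c hc.1
  have hle := hai.setDegree_insert_add_setDegree_insert_le (S := {x}) hF (by simp)
    (by simpa using hbx) (by simpa using hcx) hbc hB (by simp [hb.2, hc.2, hx])
  lia

lemma card_le_setDegree_add_of_disjoint (hai : IsAlmostIntersecting s F)
    (hF : (F : Set (Finset α)).Sized 3) (hH : ∀ f ∈ F, x ∉ f → 2 ≤ #(f ∩ H))
    (he : e ∈ F) (hxe : x ∈ e) (heH : Disjoint e H) :
    #F ≤ setDegree F {x} + s + (#H).choose 2 * 2 := by
  have hcover : {f ∈ F | x ∉ f} ⊆ {f ∈ F | Disjoint e f} ∪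
      (H.powersetCard 2).biUnion fun P => {f ∈ F | P ⊆ f ∧ ¬Disjoint (e.erase x) f} := by
    intro f hf
    obtain ⟨hfF, hxf⟩ := mem_filter.1 hf
    by_cases hef : Disjoint e f
    · exact mem_union_left _ (mem_filter.2 ⟨hfF, hef⟩)
    obtain ⟨P, hP, hP2⟩ := exists_subset_card_eq (hH f hfF hxf)
    rw [subset_inter_iff] at hP
    refine mem_union_right _ (mem_biUnion.2 ⟨P, mem_powersetCard.2 ⟨hP.2, hP2⟩,
      mem_filter.2 ⟨hfF, hP.1, fun h => hef ?_⟩⟩)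
    rw [← insert_erase hxe]
    exact disjoint_insert_left.2 ⟨hxf, h⟩
  have hmeet : ∀ P ∈ H.powersetCard 2, #{f ∈ F | P ⊆ f ∧ ¬Disjoint (e.erase x) f} ≤ 2 := by
    intro P hP
    obtain ⟨hPH, hP2⟩ := mem_powersetCard.1 hP
    have hle := card_superset_meeting_le_card (S := P) (T := e.erase x) hF (by rw [hP2])
      (heH.symm.mono hPH (erase_subset x e))
    rwa [card_erase_of_mem hxe, hF he] at hle
  have hsplit := card_filter_add_card_filter_not (s := F) fun f => x ∈ f
  calc #F = setDegree F {x} + #{f ∈ F | x ∉ f} := by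
        simp only [setDegree, singleton_subset_iff, hsplit]
    _ ≤ setDegree F {x} + (s + (#H).choose 2 * 2) := by
        gcongr
        refine (card_le_card hcover).trans ((card_union_le _ _).trans
          (Nat.add_le_add (hai e he) ?_))
        rw [← card_powersetCard]
        exact card_biUnion_le_card_mul _ _ _ hmeet
    _ = setDegree F {x} + s + (#H).choose 2 * 2 := (add_assoc _ _ _).symm

lemma le_setDegree_of_forall_le (hai : IsAlmostIntersecting s F) (hs : 80 < s)
    (hF : (F : Set (Finset α)).Sized 3) (hcard : 6 * s + 10 < #F)
    (hmax : ∀ y, setDegree F {y} ≤ setDegree F {x}) (hB : B ∈ F) (hx : x ∉ B) :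
    14 * s ≤ 5 * setDegree F {x} + 9 := by
  have hcard_le : #F ≤ s + 3 * setDegree F {x} := by
    rw [← setDegree_empty, ← hF hB]
    exact (hai.setDegree_le_add_sum hB).trans
      (Nat.add_le_add_left (sum_le_card_nsmul B _ _ fun b _ => hmax b) s)
  obtain ⟨y, hyB, hy⟩ : ∃ y ∈ B, setDegree F {x} ≤ s + 3 * setDegree F {y, x} := by
    obtain ⟨y, hyB, hy⟩ := exists_max_image B (fun b => setDegree F {b, x})
      (card_pos.1 (by rw [hF hB]; norm_num))
    refine ⟨y, hyB, (hai.setDegree_le_add_sum hB).trans (Nat.add_le_add_left ?_ s)⟩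
    rw [← hF hB]
    exact sum_le_card_nsmul B _ _ hy
  have havoid : #{e ∈ F | Disjoint {y, x} e} ≤ s + 14 := by
    have hmul := hai.card_disjoint_mul_le hF (S := {y, x})
      (by rw [card_pair (ne_of_mem_of_not_mem hyB hx)])
    obtain ⟨w, hw⟩ : ∃ w, setDegree F {y, x} = w + 3 := Nat.exists_eq_add_of_le' (by lia)
    rw [hw, Nat.add_sub_cancel] at hmul
    by_contra! hlt
    nlinarith [Nat.mul_le_mul_right w hlt]
  have hinclusion_exclusion := card_add_setDegree_pair (F := F) (x := x) (y := y)
  have hy_le := hmax y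
  lia

lemma setDegree_lt_of_card_inter_le_one (hai : IsAlmostIntersecting s F)
    (hF : (F : Set (Finset α)).Sized 3) (hcodeg : ∀ x y, x ≠ y → setDegree F {x, y} ≤ m)
    (ht : 0 < t) (hB : B ∈ F) (hx : x ∉ B) (hBH : #(B ∩ codegreeNbhd F x t) ≤ 1) (hy : y ∈ B) :
    setDegree F {x} < setDegree F {y, x} + s + m + t := by
  obtain ⟨u, v, huv, hBe⟩ := card_eq_two.1
    (show #(B.erase y) = 2 by rw [card_erase_of_mem hy, hF hB])
  have huvB : {u, v} ⊆ B := hBe ▸ erase_subset y B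
  have hux : u ≠ x := ne_of_mem_of_not_mem (huvB (by simp)) hx
  have hvx : v ≠ x := ne_of_mem_of_not_mem (huvB (by simp)) hx
  have hlight : setDegree F {u, x} < t ∨ setDegree F {v, x} < t := by
    by_contra! ⟨hu, hv⟩
    have huvH : {u, v} ⊆ B ∩ codegreeNbhd F x t := subset_inter huvB (by
      simp [insert_subset_iff, mem_codegreeNbhd ht, hux, hvx, hu, hv])
    have := (card_le_card huvH).trans hBH
    rw [card_pair huv] at this
    lia
  have hsum := hai.setDegree_le_add_sum (S := {x}) hB
  rw [← add_sum_erase B _ hy, hBe, sum_pair huv] at hsum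
  have hu := hcodeg u x hux
  have hv := hcodeg v x hvx
  lia

lemma two_lt_card_codegreeNbhd (hai : IsAlmostIntersecting s F) (hs : 201 < s)
    (hF : (F : Set (Finset α)).Sized 3) (hcodeg : ∀ x y, x ≠ y → setDegree F {x, y} ≤ s + 3)
    (hcard : 6 * s + 10 < #F) (hlower : 14 * s ≤ 5 * setDegree F {x} + 9)
    (hupper : setDegree F {x} ≤ 4 * s + 9) : 2 < #(codegreeNbhd F x ((s + 9) / 2)) := by
  by_contra! hH
  set H := codegreeNbhd F x ((s + 9) / 2)
  set N := codegreeNbhd F x (setDegree F {x} + 1 - (s + (s + 3) + (s + 9) / 2))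
  have hheavy : #{e ∈ F | 2 ≤ #(e ∩ H)} ≤ s + 3 := card_two_le_card_inter_le hcodeg hH
  -- A constant above `12` is easier to reach here but costs more in the bound `hlight` below.
  have hN : #N < 12 := card_codegreeNbhd_lt hF (by rw [show Nat.choose 12 2 = 66 from rfl]; lia)
  have hlight : #{e ∈ F | x ∉ e ∧ #(e ∩ H) ≤ 1} ≤ 165 := by
    have hsub : {e ∈ F | x ∉ e ∧ #(e ∩ H) ≤ 1} ⊆ N.powersetCard 3 := fun B hB => by
      obtain ⟨hBF, hxB, hBH⟩ := mem_filter.1 hB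
      refine mem_powersetCard.2 ⟨fun y hy => ?_, hF hBF⟩
      have hlt := hai.setDegree_lt_of_card_inter_le_one hF hcodeg (by lia) hBF hxB hBH hy
      exact (mem_codegreeNbhd (by lia)).2 ⟨ne_of_mem_of_not_mem hy hxB, by lia⟩
    calc #{e ∈ F | x ∉ e ∧ #(e ∩ H) ≤ 1} ≤ (#N).choose 3 :=
          (card_le_card hsub).trans_eq (card_powersetCard 3 N)
      _ ≤ Nat.choose 11 3 := Nat.choose_le_choose 3 (Nat.le_of_lt_succ hN)
      _ = 165 := rfl
  have hcover : F ⊆ {e ∈ F | {x} ⊆ e} ∪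
      ({e ∈ F | 2 ≤ #(e ∩ H)} ∪ {e ∈ F | x ∉ e ∧ #(e ∩ H) ≤ 1}) := fun e he => by
    have hdichotomy := Nat.lt_or_ge 1 #(e ∩ H)
    simp only [mem_union, mem_filter, singleton_subset_iff]
    tauto
  have hF_le := (card_le_card hcover).trans ((card_union_le _ _).trans
    (Nat.add_le_add_left ((card_union_le _ _).trans (Nat.add_le_add hheavy hlight)) _))
  rw [← setDegree] at hF_le
  lia

lemma two_le_card_inter_insert (hai : IsAlmostIntersecting s F) (hs : 4 < s)
    (hF : (F : Set (Finset α)).Sized 3) (hcard : 6 * s + 10 < #F)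
    (hdeg : setDegree F {x} ≤ 4 * s + 9) (hH3 : #H = 3)
    (hH : ∀ b ∈ H, b ≠ x ∧ s + 8 ≤ 2 * setDegree F {b, x}) (he : e ∈ F) :
    2 ≤ #(e ∩ insert x H) := by
  have havoid : ∀ f ∈ F, x ∉ f → 2 ≤ #(f ∩ H) := fun f hf hxf => by
    have hsdiff := hai.card_sdiff_le_one hF hH hf hxf
    have hsplit := card_sdiff_add_card_inter H f
    rw [inter_comm] at hsplit
    lia
  by_cases hxe : x ∈ e
  · have hmeet : (e ∩ H).Nonempty := by
      rw [← not_disjoint_iff_nonempty_inter]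
      intro hdisj
      have hle := hai.card_le_setDegree_add_of_disjoint hF havoid he hxe hdisj
      rw [hH3, show Nat.choose 3 2 = 3 from rfl] at hle
      lia
    have hx : x ∉ e ∩ H := fun hx => (hH x (mem_inter.1 hx).2).1 rfl
    rw [inter_insert_of_mem hxe, card_insert_of_notMem hx]
    exact Nat.succ_le_succ (card_pos.2 hmeet)
  · rw [inter_insert_of_notMem hxe]
    exact havoid e he hxe

end IsAlmostIntersecting

end

theorem stmt_16_general {α : Type*} [DecidableEq α] (s : ℕ) (hs : 201 < s)
    (F : Finset (Finset α))
    (huniform : ∀ A ∈ F, A.card = 3)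
    (hai : ∀ A ∈ F, (F.filter fun B => Disjoint A B).card ≤ s)
    (hpair : ∀ e ∈ F, ∀ x ∈ e, ∀ y ∈ e, x ≠ y → ∃ g ∈ F, x ∉ g ∧ y ∉ g) :
    F.card ≤ 6 * s + 10 := by
  have hai : IsAlmostIntersecting s F := hai
  have hF : (F : Set (Finset α)).Sized 3 := fun A hA => huniform A hA
  have hcodeg : ∀ x y, x ≠ y → setDegree F {x, y} ≤ s + 3 := fun _ _ =>
    hai.setDegree_pair_le hF hpair
  by_contra! hcard
  obtain ⟨e, he⟩ : F.Nonempty := card_pos.1 (by lia)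
  obtain ⟨v, -⟩ : e.Nonempty := card_pos.1 (by rw [hF he]; norm_num)
  have : Nonempty α := ⟨v⟩
  obtain ⟨x, hmax⟩ := exists_forall_setDegree_singleton_le F
  obtain ⟨B, hB, hxB⟩ := exists_edge_notMem hF hpair ⟨e, he⟩ x
  have hupper : setDegree F {x} ≤ 4 * s + 9 := by
    have := hai.setDegree_singleton_le hF hcodeg hB hxB
    lia
  have hlower := hai.le_setDegree_of_forall_le (by lia) hF hcard hmax hB hxB
  obtain ⟨H, hHsub, hH3⟩ := exists_subset_card_eq
    (hai.two_lt_card_codegreeNbhd hs hF hcodeg hcard hlower hupper)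
  have hH : ∀ b ∈ H, b ≠ x ∧ s + 8 ≤ 2 * setDegree F {b, x} := fun b hb => by
    have := (mem_codegreeNbhd (by lia)).1 (hHsub hb)
    exact ⟨this.1, by lia⟩
  have hK : #(insert x H) = 4 := by
    rw [card_insert_of_notMem fun hx => (hH x hx).1 rfl, hH3]
  exact hcard.not_ge <| hai.card_le_of_two_le_card_inter (by lia) hF hcodeg hK fun f hf =>
    hai.two_le_card_inter_insert (by lia) hF hcard hupper hH3 hH hf

/-- Let `s > 625` and let `F` be a 3-uniform `[0,s]`-almost intersecting
hypergraph such that for every edge `e ∈ F` and every two vertices `x, y ∈ e`, there is an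
edge of `F` disjoint from `{x,y}`. Then `F` has at most `6s+10` edges. -/
theorem stmt_16 {α : Type*} [DecidableEq α] (s : ℕ) (hs : 625 < s)
    (F : Finset (Finset α))
    (huniform : ∀ A ∈ F, A.card = 3)
    (hai : ∀ A ∈ F, (F.filter fun B => Disjoint A B).card ≤ s)
    (hpair : ∀ e ∈ F, ∀ x ∈ e, ∀ y ∈ e, x ≠ y → ∃ g ∈ F, x ∉ g ∧ y ∉ g) :
    F.card ≤ 6 * s + 10 :=
  stmt_16_general s (by lia) F huniform hai hpair
end
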